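/- arXiv:1604.07575 — 9 statements merged into one kernel-verified Lean document; each statement's English description precedes it below -/
import Mathlib

section
/- Let x : ℕ → ℝ be a sequence with x_n → 0. Then the following are equivalent: (1) the series of positive terms diverges to +∞ and the series of negative terms diverges to −∞ (i.e., ∑_{n : x_n > 0} x_n = +∞ and ∑_{n : x_n < 0} x_n = −∞); (2) the achievement set A(x) equals all of ℝ. -/
open Filter Topology

/-- The achievement set of a sequence: all limits of partial sums of subseries. -/
def achv {X : Type*} [AddCommMonoid X] [TopologicalSpace X] (x : ℕ → X) : Set X :=
  {s | ∃ ε : ℕ → Bool,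
    Tendsto (fun N => ∑ n ∈ Finset.range N, if ε n then x n else 0) atTop (𝓝 s)}

/-- The error of the greedy approximation of `s` by a subseries of `x`: a positive term is taken
when the current partial sum is at most `s`, a negative one when it exceeds `s`. -/
noncomputable def greedyError (x : ℕ → ℝ) (s : ℝ) : ℕ → ℝ
  | 0 => -s
  | n + 1 => greedyError x s n +
      if (greedyError x s n ≤ 0 ∧ 0 < x n) ∨ (0 < greedyError x s n ∧ x n < 0) then x n else 0

theorem greedyError_of_nonpos {x : ℕ → ℝ} {s : ℝ} {n : ℕ} (h : greedyError x s n ≤ 0) :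
    greedyError x s (n + 1) = greedyError x s n + if 0 < x n then x n else 0 := by
  simp [greedyError, h, not_lt.mpr h]

theorem greedyError_of_pos {x : ℕ → ℝ} {s : ℝ} {n : ℕ} (h : 0 < greedyError x s n) :
    greedyError x s (n + 1) = greedyError x s n + if x n < 0 then x n else 0 := by
  simp [greedyError, h, not_le.mpr h]

/-- Once the terms are smaller than `e`, a greedy error in `[-e, e]` stays there. -/
theorem abs_greedyError_succ_le {x : ℕ → ℝ} {s e : ℝ} {n : ℕ} (hxn : |x n| < e)
    (h : |greedyError x s n| ≤ e) : |greedyError x s (n + 1)| ≤ e := by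
  rw [abs_lt] at hxn
  rw [abs_le] at h ⊢
  rcases le_or_gt (greedyError x s n) 0 with h0 | h0
  · rw [greedyError_of_nonpos h0]
    split_ifs <;> constructor <;> linarith
  · rw [greedyError_of_pos h0]
    split_ifs <;> constructor <;> linarith

theorem exists_neg_le_greedyError {x : ℕ → ℝ} (s : ℝ) {e : ℝ} (he : 0 < e)
    (hpos : Tendsto (fun N => ∑ n ∈ Finset.range N, if 0 < x n then x n else 0) atTop atTop)
    (N : ℕ) : ∃ m ≥ N, -e ≤ greedyError x s m := by
  by_contra! hcon
  have hsum : ∀ m ≥ N, greedyError x s m - greedyError x s N =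
      (∑ n ∈ Finset.range m, if 0 < x n then x n else 0) -
        ∑ n ∈ Finset.range N, if 0 < x n then x n else 0 := by
    intro m hm
    induction m, hm using Nat.le_induction with
    | base => simp
    | succ m hm ih =>
      rw [greedyError_of_nonpos (by linarith [hcon m hm]), Finset.sum_range_succ]
      linarith
  obtain ⟨m, hm, hNm⟩ := ((hpos.eventually_ge_atTop
    ((∑ n ∈ Finset.range N, if 0 < x n then x n else 0) - greedyError x s N)).and
      (eventually_ge_atTop N)).exists
  linarith [hsum m hNm, hcon m hNm]

theorem exists_greedyError_le {x : ℕ → ℝ} (s : ℝ) {e : ℝ} (he : 0 < e)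
    (hneg : Tendsto (fun N => ∑ n ∈ Finset.range N, if x n < 0 then x n else 0) atTop atBot)
    (N : ℕ) : ∃ m ≥ N, greedyError x s m ≤ e := by
  by_contra! hcon
  have hsum : ∀ m ≥ N, greedyError x s m - greedyError x s N =
      (∑ n ∈ Finset.range m, if x n < 0 then x n else 0) -
        ∑ n ∈ Finset.range N, if x n < 0 then x n else 0 := by
    intro m hm
    induction m, hm using Nat.le_induction with
    | base => simp
    | succ m hm ih =>
      rw [greedyError_of_pos (by linarith [hcon m hm]), Finset.sum_range_succ]
      linarith
  obtain ⟨m, hm, hNm⟩ := ((hneg.eventually_le_atBot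
    ((∑ n ∈ Finset.range N, if x n < 0 then x n else 0) - greedyError x s N)).and
      (eventually_ge_atTop N)).exists
  linarith [hsum m hNm, hcon m hNm]

theorem exists_abs_greedyError_le {x : ℕ → ℝ} (s : ℝ) {e : ℝ} (he : 0 < e)
    (hpos : Tendsto (fun N => ∑ n ∈ Finset.range N, if 0 < x n then x n else 0) atTop atTop)
    (hneg : Tendsto (fun N => ∑ n ∈ Finset.range N, if x n < 0 then x n else 0) atTop atBot)
    {N : ℕ} (hN : ∀ n ≥ N, |x n| < e) : ∃ m ≥ N, |greedyError x s m| ≤ e := by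
  by_contra! hcon
  rcases le_or_gt (greedyError x s N) 0 with h0 | h0
  · have hle : ∀ m ≥ N, greedyError x s m ≤ 0 := by
      intro m hm
      induction m, hm using Nat.le_induction with
      | base => exact h0
      | succ m hm ih =>
        have hc := hcon m hm
        have hxm := abs_lt.mp (hN m hm)
        rw [abs_of_nonpos ih] at hc
        rw [greedyError_of_nonpos ih]
        split_ifs <;> linarith
    obtain ⟨m, hm, hme⟩ := exists_neg_le_greedyError s he hpos N
    have hc := hcon m hm
    rw [abs_of_nonpos (hle m hm)] at hc
    linarith
  · have hlt : ∀ m ≥ N, 0 < greedyError x s m := by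
      intro m hm
      induction m, hm using Nat.le_induction with
      | base => exact h0
      | succ m hm ih =>
        have hc := hcon m hm
        have hxm := abs_lt.mp (hN m hm)
        rw [abs_of_pos ih] at hc
        rw [greedyError_of_pos ih]
        split_ifs <;> linarith
    obtain ⟨m, hm, hme⟩ := exists_greedyError_le s he hneg N
    have hc := hcon m hm
    rw [abs_of_pos (hlt m hm)] at hc
    linarith

theorem tendsto_greedyError {x : ℕ → ℝ} (hx : Tendsto x atTop (𝓝 0)) (s : ℝ)
    (hpos : Tendsto (fun N => ∑ n ∈ Finset.range N, if 0 < x n then x n else 0) atTop atTop)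
    (hneg : Tendsto (fun N => ∑ n ∈ Finset.range N, if x n < 0 then x n else 0) atTop atBot) :
    Tendsto (greedyError x s) atTop (𝓝 0) := by
  rw [Metric.tendsto_atTop]
  intro e he
  obtain ⟨N, hN⟩ := Metric.tendsto_atTop.mp hx (e / 2) (half_pos he)
  simp only [Real.dist_eq, sub_zero] at hN ⊢
  obtain ⟨m, hm, hme⟩ := exists_abs_greedyError_le s (half_pos he) hpos hneg hN
  refine ⟨m, fun k hk => ?_⟩
  suffices |greedyError x s k| ≤ e / 2 by linarith
  induction k, hk using Nat.le_induction with
  | base => exact hme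
  | succ k hk ih => exact abs_greedyError_succ_le (hN k (hm.le.trans hk)) ih

theorem sum_greedy_eq (x : ℕ → ℝ) (s : ℝ) (N : ℕ) :
    (∑ n ∈ Finset.range N,
      if (greedyError x s n ≤ 0 ∧ 0 < x n) ∨ (0 < greedyError x s n ∧ x n < 0) then x n else 0) =
      greedyError x s N + s := by
  induction N with
  | zero => simp [greedyError]
  | succ N ih =>
    rw [Finset.sum_range_succ, ih, greedyError]
    ring

theorem tendsto_sum_pos_of_achv_eq_univ {x : ℕ → ℝ} (h : achv x = Set.univ) :
    Tendsto (fun N => ∑ n ∈ Finset.range N, if 0 < x n then x n else 0) atTop atTop := by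
  have hmono : Monotone (fun N => ∑ n ∈ Finset.range N, if 0 < x n then x n else 0) := by
    refine monotone_nat_of_le_succ fun n => ?_
    rw [Finset.sum_range_succ]
    split_ifs <;> linarith
  refine tendsto_atTop_atTop_of_monotone hmono fun b => ?_
  by_contra! hb
  obtain ⟨ε, hε⟩ : b + 1 ∈ achv x := h ▸ Set.mem_univ _
  have hle : b + 1 ≤ b := le_of_tendsto' hε fun N => by
    refine (Finset.sum_le_sum fun n _ => ?_).trans (hb N).le
    split_ifs <;> linarith
  linarith

theorem achv_neg_eq_univ {x : ℕ → ℝ} (h : achv x = Set.univ) :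
    achv (fun n => -x n) = Set.univ := by
  refine Set.eq_univ_of_forall fun s => ?_
  obtain ⟨ε, hε⟩ : -s ∈ achv x := h ▸ Set.mem_univ _
  refine ⟨ε, ?_⟩
  have hsum := hε.neg
  rw [neg_neg] at hsum
  refine hsum.congr fun N => ?_
  rw [← Finset.sum_neg_distrib]
  exact Finset.sum_congr rfl fun n _ => by split_ifs <;> simp

/-- For `x : ℕ → ℝ` with `x_n → 0`: the series of positive terms diverges to `+∞`
and the series of negative terms diverges to `−∞` if and only if `A(x) = ℝ`. -/
theorem stmt_1 (x : ℕ → ℝ) (hx : Tendsto x atTop (𝓝 0)) :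
    (Tendsto (fun N => ∑ n ∈ Finset.range N, if 0 < x n then x n else 0) atTop atTop ∧
      Tendsto (fun N => ∑ n ∈ Finset.range N, if x n < 0 then x n else 0) atTop atBot)
    ↔ achv x = Set.univ := by
  constructor
  · rintro ⟨hpos, hneg⟩
    refine Set.eq_univ_of_forall fun s => ?_
    refine ⟨fun n => decide
      ((greedyError x s n ≤ 0 ∧ 0 < x n) ∨ (0 < greedyError x s n ∧ x n < 0)), ?_⟩
    have hlim := (tendsto_greedyError hx s hpos hneg).add_const s
    rw [zero_add] at hlim
    refine hlim.congr fun N => ?_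
    rw [← sum_greedy_eq]
    exact Finset.sum_congr rfl fun n _ => by simp only [decide_eq_true_eq]
  · intro h
    refine ⟨tendsto_sum_pos_of_achv_eq_univ h, ?_⟩
    have hneg := tendsto_neg_atTop_atBot.comp
      (tendsto_sum_pos_of_achv_eq_univ (achv_neg_eq_univ h))
    refine hneg.congr fun N => ?_
    rw [Function.comp_apply, ← Finset.sum_neg_distrib]
    exact Finset.sum_congr rfl fun n _ => by simp only [neg_pos]; split_ifs <;> simp
end

section
/- Let x : ℕ → ℝ be a sequence with x_n → 0 and with infinitely many positive terms or infinitely many negative terms. Then exactly one of the two subseries (of the positive terms and of the negative terms) converges while the other diverges if and only if the achievement set A(x) is a closed half line, i.e., A(x) = [a, +∞) for some a ∈ ℝ or A(x) = (−∞, a] for some a ∈ ℝ. Moreover, if ∑_{n : x_n < 0} x_n converges and ∑_{n : x_n > 0} x_n = +∞, then A(x) = [∑_{n : x_n < 0} x_n, +∞). -/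
open Filter Topology

/-- A nonnegative null sequence with divergent sum has a subseries with any prescribed
nonnegative sum. -/
theorem exists_subseries_tendsto {y : ℕ → ℝ} (hy0 : ∀ n, 0 ≤ y n) (hy : Tendsto y atTop (𝓝 0))
    (hdiv : Tendsto (fun N => ∑ n ∈ Finset.range N, y n) atTop atTop) {c : ℝ} (hc : 0 ≤ c) :
    ∃ E : ℕ → Bool,
      Tendsto (fun N => ∑ n ∈ Finset.range N, if E n then y n else 0) atTop (𝓝 c) := by
  let S : ℕ → ℝ := fun n => Nat.rec 0 (fun k r => r + if r + y k ≤ c then y k else 0) n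
  have hS : ∀ n, S (n + 1) = S n + if S n + y n ≤ c then y n else 0 := fun n => rfl
  refine ⟨fun n => decide (S n + y n ≤ c), ?_⟩
  have hsum : ∀ N, (∑ n ∈ Finset.range N,
      if decide (S n + y n ≤ c) = true then y n else 0) = S N := by
    intro N
    induction N with
    | zero => simp [S]
    | succ k ih => rw [Finset.sum_range_succ, ih, hS]; simp
  simp_rw [hsum]
  have hle : ∀ n, S n ≤ c := by
    intro n
    induction n with
    | zero => exact hc
    | succ k ih => rw [hS]; split_ifs with h <;> linarith
  have hmono : Monotone S := monotone_nat_of_le_succ fun n => by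
    rw [hS]; split_ifs <;> linarith [hy0 n]
  have hbdd : BddAbove (Set.range S) := ⟨c, by rintro _ ⟨n, rfl⟩; exact hle n⟩
  have hlim := tendsto_atTop_ciSup hmono hbdd
  have hsup := le_ciSup hbdd
  set L := ⨆ n, S n
  rcases (ciSup_le hle : L ≤ c).eq_or_lt with h | h
  · exact h ▸ hlim
  · exfalso
    obtain ⟨K, hK⟩ := eventually_atTop.1 (hy.eventually_lt_const (sub_pos.2 h))
    have hstep : ∀ n ≥ K, ∑ k ∈ Finset.range n, y k = S n - S K + ∑ k ∈ Finset.range K, y k := by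
      intro n hn
      induction n, hn using Nat.le_induction with
      | base => simp
      | succ n hn ih =>
        rw [Finset.sum_range_succ, ih, hS, if_pos (by linarith [hsup n, hK n hn])]
        ring
    obtain ⟨n, hn, hnK⟩ := ((hdiv.eventually_gt_atTop
      (c - S K + ∑ k ∈ Finset.range K, y k)).and (eventually_ge_atTop K)).exists
    rw [hstep n hnK] at hn
    linarith [hle n]

theorem mem_achv_neg {x : ℕ → ℝ} {t : ℝ} (h : t ∈ achv x) : -t ∈ achv (fun n => -x n) := by
  obtain ⟨ε, hε⟩ := h
  refine ⟨ε, hε.neg.congr fun N => ?_⟩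
  rw [← Finset.sum_neg_distrib]
  exact Finset.sum_congr rfl fun n _ => by split_ifs <;> simp

theorem achv_neg (x : ℕ → ℝ) : achv (fun n => -x n) = -achv x := by
  ext t
  refine ⟨fun h => ?_, fun h => by simpa using mem_achv_neg (Set.mem_neg.1 h)⟩
  simpa using mem_achv_neg h

theorem le_of_mem_achv {x : ℕ → ℝ} {s t : ℝ}
    (hs : Tendsto (fun N => ∑ n ∈ Finset.range N, if x n < 0 then x n else 0) atTop (𝓝 s))
    (ht : t ∈ achv x) : s ≤ t := by
  obtain ⟨ε, hε⟩ := ht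
  exact le_of_tendsto_of_tendsto' hs hε fun N => Finset.sum_le_sum fun n _ => by
    split_ifs <;> linarith

theorem tendsto_posSum_atTop {x : ℕ → ℝ}
    (h : ¬ ∃ s, Tendsto (fun N => ∑ n ∈ Finset.range N, if 0 < x n then x n else 0)
      atTop (𝓝 s)) :
    Tendsto (fun N => ∑ n ∈ Finset.range N, if 0 < x n then x n else 0) atTop atTop := by
  refine (tendsto_atTop_of_monotone (monotone_nat_of_le_succ fun n => ?_)).resolve_right h
  rw [Finset.sum_range_succ]
  split_ifs <;> linarith

theorem mem_achv_of_nonneg {x : ℕ → ℝ} (hx : Tendsto x atTop (𝓝 0))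
    (h : Tendsto (fun N => ∑ n ∈ Finset.range N, if 0 < x n then x n else 0) atTop atTop)
    {c : ℝ} (hc : 0 ≤ c) : c ∈ achv x := by
  have hy : Tendsto (fun n => if 0 < x n then x n else 0) atTop (𝓝 0) := by
    refine squeeze_zero_norm (fun n => ?_) (by simpa using hx.norm)
    split_ifs <;> simp
  obtain ⟨E, hE⟩ := exists_subseries_tendsto (fun n => by split_ifs <;> linarith) hy h hc
  refine ⟨fun n => E n && decide (0 < x n), hE.congr fun N => Finset.sum_congr rfl fun n _ => ?_⟩
  by_cases h1 : E n <;> by_cases h2 : 0 < x n <;> simp [h1, h2]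

theorem achv_eq_Ici {x : ℕ → ℝ} (hx : Tendsto x atTop (𝓝 0)) {s : ℝ}
    (hs : Tendsto (fun N => ∑ n ∈ Finset.range N, if x n < 0 then x n else 0) atTop (𝓝 s))
    (hp : Tendsto (fun N => ∑ n ∈ Finset.range N, if 0 < x n then x n else 0) atTop atTop) :
    achv x = Set.Ici s := by
  refine Set.Subset.antisymm (fun t ht => le_of_mem_achv hs ht) fun t ht => ?_
  have habs : Tendsto (fun N => ∑ n ∈ Finset.range N, |x n|) atTop atTop :=
    tendsto_atTop_mono (fun N => Finset.sum_le_sum fun n _ => by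
      split_ifs
      · exact le_abs_self _
      · exact abs_nonneg _) hp
  obtain ⟨E, hE⟩ := exists_subseries_tendsto (fun n => abs_nonneg (x n))
    (by simpa using hx.abs) habs (sub_nonneg.2 (Set.mem_Ici.1 ht))
  -- Select the positive terms in `E` and the negative terms outside `E`.
  refine ⟨fun n => if x n < 0 then !E n else E n, ?_⟩
  have hadd := hs.add hE
  rw [add_sub_cancel] at hadd
  refine hadd.congr fun N => ?_
  rw [← Finset.sum_add_distrib]
  refine Finset.sum_congr rfl fun n _ => ?_
  rcases lt_or_ge (x n) 0 with h | h
  · cases hb : E n <;> simp [h, hb, abs_of_neg h]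
  · simp [h.not_gt, abs_of_nonneg h]

theorem exists_tendsto_posSum_neg_iff (x : ℕ → ℝ) :
    (∃ s, Tendsto (fun N => ∑ n ∈ Finset.range N, if 0 < -x n then -x n else 0) atTop (𝓝 s)) ↔
      ∃ s, Tendsto (fun N => ∑ n ∈ Finset.range N, if x n < 0 then x n else 0) atTop (𝓝 s) := by
  have h : (fun N => ∑ n ∈ Finset.range N, if 0 < -x n then -x n else 0) =
      fun N => -∑ n ∈ Finset.range N, if x n < 0 then x n else 0 := by
    funext N
    rw [← Finset.sum_neg_distrib]
    exact Finset.sum_congr rfl fun n _ => by simp only [neg_pos]; split_ifs <;> simp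
  rw [h]
  exact ⟨fun ⟨s, hs⟩ => ⟨-s, by simpa using hs.neg⟩, fun ⟨s, hs⟩ => ⟨-s, hs.neg⟩⟩

theorem exists_achv_eq_Ici_iff {x : ℕ → ℝ} (hx : Tendsto x atTop (𝓝 0)) :
    (∃ a : ℝ, achv x = Set.Ici a) ↔
      (∃ s, Tendsto (fun N => ∑ n ∈ Finset.range N, if x n < 0 then x n else 0) atTop (𝓝 s)) ∧
      ¬ ∃ s, Tendsto (fun N => ∑ n ∈ Finset.range N, if 0 < x n then x n else 0)
        atTop (𝓝 s) := by
  constructor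
  · rintro ⟨a, ha⟩
    constructor
    · by_contra hn
      rw [← exists_tendsto_posSum_neg_iff] at hn
      have hmem := mem_achv_of_nonneg (by simpa using hx.neg) (tendsto_posSum_atTop hn)
        (c := |a| + 1) (by positivity)
      rw [achv_neg, ha, Set.mem_neg, Set.mem_Ici] at hmem
      linarith [neg_abs_le a]
    · intro hp
      have hp' : ∃ s, Tendsto (fun N => ∑ n ∈ Finset.range N, if -x n < 0 then -x n else 0)
          atTop (𝓝 s) := by
        rw [← exists_tendsto_posSum_neg_iff]
        simpa only [neg_neg] using hp
      obtain ⟨s, hs⟩ := hp'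
      have hmem : -(|a| + |s| + 1) ∈ achv (fun n => -x n) := by
        rw [achv_neg, ha, Set.mem_neg, Set.mem_Ici]
        linarith [le_abs_self a, abs_nonneg s]
      linarith [le_of_mem_achv hs hmem, neg_abs_le s, abs_nonneg a]
  · rintro ⟨⟨s, hs⟩, hp⟩
    exact ⟨s, achv_eq_Ici hx hs (tendsto_posSum_atTop hp)⟩

theorem exists_achv_eq_Iic_iff {x : ℕ → ℝ} (hx : Tendsto x atTop (𝓝 0)) :
    (∃ a : ℝ, achv x = Set.Iic a) ↔
      (∃ s, Tendsto (fun N => ∑ n ∈ Finset.range N, if 0 < x n then x n else 0) atTop (𝓝 s)) ∧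
      ¬ ∃ s, Tendsto (fun N => ∑ n ∈ Finset.range N, if x n < 0 then x n else 0)
        atTop (𝓝 s) := by
  have h := exists_achv_eq_Ici_iff (x := fun n => -x n) (by simpa using hx.neg)
  rw [exists_tendsto_posSum_neg_iff, ← exists_tendsto_posSum_neg_iff (fun n => -x n), achv_neg] at h
  simp only [neg_neg] at h
  rw [← h]
  constructor
  · rintro ⟨a, ha⟩
    exact ⟨-a, by rw [ha, Set.neg_Iic]⟩
  · rintro ⟨a, ha⟩
    exact ⟨-a, by rw [← neg_neg (achv x), ha, Set.neg_Ici]⟩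

/-- For `x : ℕ → ℝ` with `x_n → 0` and infinitely many positive or infinitely
many negative terms: exactly one of the subseries of positive terms and of negative terms
converges (and the other diverges) iff `A(x)` is a closed half line. Moreover, if the series
of negative terms converges to `s` and the series of positive terms diverges to `+∞`,
then `A(x) = [s, ∞)`. -/
theorem stmt_2 (x : ℕ → ℝ) (hx : Tendsto x atTop (𝓝 0))
    (hinf : {n | 0 < x n}.Infinite ∨ {n | x n < 0}.Infinite) :
    (Xor'
        (∃ s, Tendsto (fun N => ∑ n ∈ Finset.range N, if 0 < x n then x n else 0)
          atTop (𝓝 s))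
        (∃ s, Tendsto (fun N => ∑ n ∈ Finset.range N, if x n < 0 then x n else 0)
          atTop (𝓝 s))
      ↔ ((∃ a : ℝ, achv x = Set.Ici a) ∨ (∃ a : ℝ, achv x = Set.Iic a))) ∧
    (∀ s : ℝ,
      Tendsto (fun N => ∑ n ∈ Finset.range N, if x n < 0 then x n else 0) atTop (𝓝 s) →
      Tendsto (fun N => ∑ n ∈ Finset.range N, if 0 < x n then x n else 0) atTop atTop →
      achv x = Set.Ici s) := by
  refine ⟨?_, fun s hs hp => achv_eq_Ici hx hs hp⟩
  rw [exists_achv_eq_Ici_iff hx, exists_achv_eq_Iic_iff hx, or_comm]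
  rfl
end

section
/- Let X be a Banach space and x : ℕ → X a sequence such that the set {n ∈ ℕ : x_n ≠ 0} is infinite and there exists δ > 0 with ‖x_n‖ ≥ δ for every n with x_n ≠ 0. Then the achievement set A(x) is countable and infinite. Moreover, if X is finite-dimensional, then A(x) is unbounded. -/
open Filter Topology

theorem sum_mem_achv {X : Type*} [AddCommMonoid X] [TopologicalSpace X] (x : ℕ → X)
    (F : Finset ℕ) : ∑ n ∈ F, x n ∈ achv x := by
  refine ⟨fun n => decide (n ∈ F), tendsto_const_nhds.congr' ?_⟩
  obtain ⟨M, hM⟩ := F.exists_nat_subset_range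
  filter_upwards [eventually_ge_atTop M] with N hN
  have hF : F ⊆ Finset.range N := hM.trans (Finset.range_mono hN)
  simp only [decide_eq_true_eq, Finset.sum_ite_mem, Finset.inter_eq_right.2 hF]

theorem mem_achv {X : Type*} [AddCommMonoid X] [TopologicalSpace X] (x : ℕ → X) (n : ℕ) :
    x n ∈ achv x := by
  simpa using sum_mem_achv x {n}

/-- A convergent subseries has only finitely many nonzero terms when the nonzero terms of `x`
are bounded away from zero. -/
theorem achv_subset_range_sum {X : Type*} [NormedAddCommGroup X] {x : ℕ → X} {δ : ℝ}
    (hδ : 0 < δ) (hx : ∀ n, x n ≠ 0 → δ ≤ ‖x n‖) :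
    achv x ⊆ Set.range fun F : Finset ℕ => ∑ n ∈ F, x n := by
  rintro s ⟨ε, hε⟩
  have hterm : Tendsto (fun N => if ε N then x N else 0) atTop (𝓝 0) := by
    simpa [Finset.sum_range_succ] using (hε.comp (tendsto_add_atTop_nat 1)).sub hε
  obtain ⟨M, hM⟩ := eventually_atTop.1 (hterm.norm.eventually_lt_const (by simpa using hδ))
  have hzero : ∀ n ≥ M, (if ε n then x n else 0) = 0 := by
    intro n hn
    by_contra h
    have hlt := hM n hn
    split_ifs at h hlt
    · exact (hx n h).not_gt hlt
    · exact h rfl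
  refine ⟨(Finset.range M).filter (ε · = true), ?_⟩
  dsimp only
  rw [Finset.sum_filter]
  refine tendsto_nhds_unique (tendsto_const_nhds.congr' ?_) hε
  filter_upwards [eventually_ge_atTop M] with N hN
  refine Finset.sum_subset (Finset.range_mono hN) fun n _ hn => hzero n ?_
  simpa using hn

/-- If infinitely many terms of `x` lie in a compact set avoiding `0`, then `x` clusters at a
nonzero vector, so its finite sums are unbounded. -/
theorem not_isBounded_achv_of_frequently_mem {X : Type*} [NormedAddCommGroup X] [NormedSpace ℝ X]
    {x : ℕ → X} {K : Set X} (hK : IsCompact K) (h0 : (0 : X) ∉ K)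
    (hx : ∃ᶠ n in atTop, x n ∈ K) : ¬ Bornology.IsBounded (achv x) := by
  intro hb
  obtain ⟨C, hC⟩ := hb.exists_norm_le
  obtain ⟨v, hvK, hv⟩ := hK.exists_mapClusterPt_of_frequently hx
  have hvpos : 0 < ‖v‖ := norm_pos_iff.2 fun h => h0 (h ▸ hvK)
  have hfreq := hv.frequently (Metric.ball_mem_nhds v (half_pos hvpos))
  obtain ⟨k, hk⟩ := exists_nat_gt (C / (‖v‖ / 2))
  obtain ⟨F, hF, rfl⟩ := (Nat.frequently_atTop_iff_infinite.1 hfreq).exists_subset_card_eq k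
  have hdist : ‖(F.card : ℝ) • v - ∑ n ∈ F, x n‖ ≤ F.card * (‖v‖ / 2) := by
    rw [Nat.cast_smul_eq_nsmul, ← Finset.sum_const, ← Finset.sum_sub_distrib, ← nsmul_eq_mul]
    refine (norm_sum_le _ _).trans (Finset.sum_le_card_nsmul _ _ _ fun n hn => ?_)
    rw [norm_sub_rev]
    exact (mem_ball_iff_norm.1 (hF hn)).le
  have hle := hC _ (sum_mem_achv x F)
  have htri := norm_sub_norm_le ((F.card : ℝ) • v) (∑ n ∈ F, x n)
  rw [norm_smul, RCLike.norm_natCast] at htri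
  rw [div_lt_iff₀ (half_pos hvpos)] at hk
  linarith

/-- If infinitely many terms are nonzero and all nonzero terms have norm at
least `δ > 0`, then the achievement set is countably infinite; moreover if `X` is finite
dimensional then the achievement set is unbounded. -/
theorem stmt_4 {X : Type*} [NormedAddCommGroup X] [NormedSpace ℝ X] [CompleteSpace X]
    (x : ℕ → X) (hinf : {n | x n ≠ 0}.Infinite)
    (hδ : ∃ δ > (0 : ℝ), ∀ n, x n ≠ 0 → δ ≤ ‖x n‖) :
    (achv x).Countable ∧ (achv x).Infinite ∧
      (FiniteDimensional ℝ X → ¬ Bornology.IsBounded (achv x)) := by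
  obtain ⟨δ, hδ, hx⟩ := hδ
  have hfreq : ∃ᶠ n in atTop, x n ≠ 0 := Nat.frequently_atTop_iff_infinite.2 hinf
  refine ⟨(Set.countable_range _).mono (achv_subset_range_sum hδ hx), fun hfin => ?_,
    fun _ hb => ?_⟩
  · exact not_isBounded_achv_of_frequently_mem (K := achv x \ {0}) hfin.sdiff.isCompact (by simp)
      (hfreq.mono fun n hn => ⟨mem_achv x n, hn⟩) hfin.isBounded
  · have : ProperSpace X := FiniteDimensional.proper ℝ X
    exact not_isBounded_achv_of_frequently_mem (K := closure (achv x) \ Metric.ball 0 δ)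
      (hb.isCompact_closure.diff Metric.isOpen_ball) (by simp [hδ])
      (hfreq.mono fun n hn => ⟨subset_closure (mem_achv x n), by simpa using hx n hn⟩) hb
end

section
/- Let X be a Banach space and x : ℕ → X a sequence such that for every δ > 0 there are infinitely many n with 0 < ‖x_n‖ < δ (equivalently, there is a subsequence of nonzero terms converging to 0). Then the achievement set A(x) contains a nonempty compact perfect set (in fact, a homeomorphic copy of the Cantor space {0,1}^ℕ). -/
open Filter Topology

section SubseriesSum

variable {X : Type*} [NormedAddCommGroup X]

/-- The sum of the subseries of `y` selected by `ε`. -/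
noncomputable def subseriesSum (y : ℕ → X) (ε : ℕ → Bool) : X :=
  ∑' n, if ε n then y n else 0

theorem norm_ite_zero_le (b : Bool) (v : X) : ‖if b then v else 0‖ ≤ ‖v‖ := by
  cases b <;> simp

theorem hasSum_subseriesSum [CompleteSpace X] {y : ℕ → X} (hy : Summable fun n => ‖y n‖)
    (ε : ℕ → Bool) : HasSum (fun n => if ε n then y n else 0) (subseriesSum y ε) :=
  (Summable.of_norm_bounded hy fun n => norm_ite_zero_le (ε n) (y n)).hasSum

theorem continuous_subseriesSum [CompleteSpace X] {y : ℕ → X} (hy : Summable fun n => ‖y n‖) :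
    Continuous (subseriesSum y) := by
  refine continuous_tsum (fun n => ?_) hy fun n ε => norm_ite_zero_le (ε n) (y n)
  exact (continuous_of_discreteTopology (f := fun b : Bool => if b then y n else 0)).comp
    (continuous_apply n)

/-- Flipping one coordinate moves the subseries sum by exactly the norm of that term. -/
theorem norm_subseriesSum_update_not_sub [CompleteSpace X] {y : ℕ → X}
    (hy : Summable fun n => ‖y n‖) (ε : ℕ → Bool) (n : ℕ) :
    ‖subseriesSum y (Function.update ε n (!ε n)) - subseriesSum y ε‖ = ‖y n‖ := by
  have hfun : (fun m => if Function.update ε n (!ε n) m then y m else 0) =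
      Function.update (fun m => if ε m then y m else 0) n (if !ε n then y n else 0) := by
    ext m
    by_cases hm : m = n
    · subst hm; simp
    · simp [hm]
  have hsum := hasSum_subseriesSum hy (Function.update ε n (!ε n))
  rw [hfun] at hsum
  rw [hsum.unique ((hasSum_subseriesSum hy ε).update n _), add_sub_cancel_right]
  cases ε n <;> simp

/-- The set of subseries sums of an absolutely convergent series having arbitrarily small nonzero
terms is perfect. -/
theorem perfect_range_subseriesSum [CompleteSpace X] {y : ℕ → X}
    (hy : Summable fun n => ‖y n‖) (hsmall : ∀ δ > (0 : ℝ), ∃ n, 0 < ‖y n‖ ∧ ‖y n‖ < δ) :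
    Perfect (Set.range (subseriesSum y)) := by
  refine ⟨(isCompact_range (continuous_subseriesSum hy)).isClosed, ?_⟩
  rw [preperfect_iff_nhds]
  rintro _ ⟨ε, rfl⟩ U hU
  obtain ⟨δ, hδ, hball⟩ := Metric.mem_nhds_iff.1 hU
  obtain ⟨n, hpos, hlt⟩ := hsmall δ hδ
  have hnorm := norm_subseriesSum_update_not_sub hy ε n
  refine ⟨_, ⟨hball ?_, Function.update ε n (!ε n), rfl⟩, ?_⟩
  · rwa [mem_ball_iff_norm, hnorm]
  · rwa [← sub_ne_zero, ← norm_pos_iff, hnorm]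

end SubseriesSum

/-- If for every `δ > 0` there are infinitely many `n` with `0 < ‖x n‖ < δ`
(i.e. some subsequence of nonzero terms tends to `0`), then the achievement set contains a
nonempty compact perfect set. -/
theorem stmt_5 {X : Type*} [NormedAddCommGroup X] [NormedSpace ℝ X] [CompleteSpace X]
    (x : ℕ → X) (h : ∀ δ > (0 : ℝ), {n | 0 < ‖x n‖ ∧ ‖x n‖ < δ}.Infinite) :
    ∃ K : Set X, K ⊆ achv x ∧ K.Nonempty ∧ IsCompact K ∧ Perfect K := by
  classical
  obtain ⟨φ, hφ, hφx⟩ := extraction_forall_of_frequently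
    (P := fun k n => 0 < ‖x n‖ ∧ ‖x n‖ < (1 / 2 : ℝ) ^ k)
    fun k => Nat.frequently_atTop_iff_infinite.2 (h _ (by positivity))
  let y : ℕ → X := fun n => if n ∈ Set.range φ then x n else 0
  have hyφ (k : ℕ) : y (φ k) = x (φ k) := if_pos ⟨k, rfl⟩
  have hy : Summable fun n => ‖y n‖ := by
    refine (hφ.injective.summable_iff fun n hn => by simp only [y, if_neg hn, norm_zero]).1 ?_
    refine Summable.of_nonneg_of_le (fun k => norm_nonneg _) (fun k => ?_) summable_geometric_two
    simpa only [Function.comp_apply, hyφ] using (hφx k).2.le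
  refine ⟨Set.range (subseriesSum y), ?_, Set.range_nonempty _,
    isCompact_range (continuous_subseriesSum hy), perfect_range_subseriesSum hy fun δ hδ => ?_⟩
  · rintro _ ⟨ε, rfl⟩
    refine ⟨fun n => ε n && decide (n ∈ Set.range φ), ?_⟩
    convert (hasSum_subseriesSum hy ε).tendsto_sum_nat using 3 with N n
    simp only [y, Bool.and_eq_true, decide_eq_true_eq, ite_and]
  · obtain ⟨k, hk⟩ := exists_pow_lt_of_lt_one hδ (by norm_num : (1 / 2 : ℝ) < 1)
    exact ⟨φ k, by rw [hyφ]; exact ⟨(hφx k).1, (hφx k).2.trans hk⟩⟩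
end

section
/- Let ∑ y_n be an absolutely convergent series in ℝ^m with y_n ≠ 0 for every n ∈ ℕ. Then for every extreme point a of the achievement set A(y) there is a unique sequence ε : ℕ → {0,1} such that a = ∑_{n} ε(n)·y(n). -/
open Filter Topology

/-- Flipping one digit of a representation of `s` stays in the achievement set. -/
theorem add_flip_mem_achv {X : Type*} [AddCommGroup X] [TopologicalSpace X] [ContinuousAdd X]
    {x : ℕ → X} {s : X} {ε : ℕ → Bool}
    (h : Tendsto (fun N => ∑ n ∈ Finset.range N, if ε n then x n else 0) atTop (𝓝 s)) (k : ℕ) :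
    s + (if ε k then -x k else x k) ∈ achv x := by
  refine ⟨Function.update ε k (!ε k), (h.add_const (if ε k then -x k else x k)).congr' ?_⟩
  filter_upwards [eventually_gt_atTop k] with N hN
  have hk : k ∈ Finset.range N := Finset.mem_range.2 hN
  rw [← Finset.add_sum_erase _ _ hk,
    ← Finset.add_sum_erase _ (fun n => if Function.update ε k (!ε k) n then x n else 0) hk]
  have hs : ∑ n ∈ (Finset.range N).erase k, (if Function.update ε k (!ε k) n then x n else 0) =
      ∑ n ∈ (Finset.range N).erase k, if ε n then x n else 0 :=
    Finset.sum_congr rfl fun n hn => by rw [Function.update_of_ne (Finset.ne_of_mem_erase hn)]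
  rw [hs]
  cases ε k <;> simp [add_comm]

/-- If `∑ y_n` is absolutely convergent in `ℝ^m` with all terms nonzero, then
every extreme point `a` of `A(y)` has a unique representation `a = ∑ ε_n y_n` with
`ε ∈ {0,1}^ℕ`. -/
theorem stmt_10 (m : ℕ) (y : ℕ → EuclideanSpace ℝ (Fin m))
    (hy : Summable fun n => ‖y n‖) (hne : ∀ n, y n ≠ 0)
    (a : EuclideanSpace ℝ (Fin m)) (ha : a ∈ achv y)
    (hext : ∀ b ∈ achv y, ∀ c ∈ achv y, a = (2⁻¹ : ℝ) • (b + c) → b = c) :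
    ∃! ε : ℕ → Bool,
      Tendsto (fun N => ∑ n ∈ Finset.range N, if ε n then y n else 0) atTop (𝓝 a) := by
  have : IsAddTorsionFree (EuclideanSpace ℝ (Fin m)) := .of_module_rat _
  obtain ⟨ε, hε⟩ := ha
  refine ⟨ε, hε, fun δ hδ => funext fun k => ?_⟩
  by_contra hk
  have h := hext _ (add_flip_mem_achv hε k) _ (add_flip_mem_achv hδ k)
  cases h₁ : ε k <;> cases h₂ : δ k <;> simp only [h₁, h₂, not_true_eq_false] at hk
  · have := h (by simp only [h₁, h₂, if_true, Bool.false_eq_true, if_false]; module)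
    simp only [h₁, h₂, if_true, Bool.false_eq_true, if_false, add_right_inj] at this
    exact hne k (self_eq_neg.1 this)
  · have := h (by simp only [h₁, h₂, if_true, Bool.false_eq_true, if_false]; module)
    simp only [h₁, h₂, if_true, Bool.false_eq_true, if_false, add_right_inj] at this
    exact hne k (neg_eq_self.1 this)
end

section
/- Let ∑ x_n be a conditionally convergent series in ℝ, and let E = {ε ∈ {0,1}^ℕ : the partial sums ∑_{n<N} ε(n)·x(n) converge as N → ∞}, a subset of the Cantor space {0,1}^ℕ with the product topology. Then: (a) E is an F_{σδ} set (a countable intersection of countable unions of closed sets); and (b) there exists a continuous map ψ : ℕ^ℕ → {0,1}^ℕ (from the Baire space with the product topology) such that for every v ∈ ℕ^ℕ, ψ(v) ∈ E if and only if v(n) → ∞ as n → ∞. -/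
open Filter Topology

/-- The positive parts of a conditionally convergent series are not summable. -/
lemma not_summable_max_zero {x : ℕ → ℝ}
    (hconv : ∃ s, Tendsto (fun N => ∑ n ∈ Finset.range N, x n) atTop (𝓝 s))
    (hnabs : ¬ Summable fun n => |x n|) : ¬ Summable fun n => max (x n) 0 := by
  intro hsum
  obtain ⟨s, hs⟩ := hconv
  apply hnabs
  have habs : ∀ n, |x n| = 2 * max (x n) 0 - x n := by
    intro n
    rcases le_total 0 (x n) with h | h
    · rw [abs_of_nonneg h, max_eq_left h]; ring
    · rw [abs_of_nonpos h, max_eq_right h]; ring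
  have hlim := (hsum.hasSum.tendsto_sum_nat.const_mul 2).sub hs
  refine ((hasSum_iff_tendsto_nat_of_nonneg (fun n => abs_nonneg (x n)) _).2
    (hlim.congr fun N => ?_)).summable
  simp only [habs, Finset.sum_sub_distrib, Finset.mul_sum]

/-- Adding the positive parts of small terms, starting at any index, the sum passes any positive
level with a small overshoot. -/
lemma exists_sum_Ico_max_zero {y : ℕ → ℝ} (hy : ¬ Summable fun n => max (y n) 0)
    {L : ℕ} {c δ : ℝ} (hc : 0 < c) (hδ : 0 ≤ δ) (hle : ∀ i, L ≤ i → y i ≤ δ) :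
    ∃ P, L < P ∧ c ≤ ∑ i ∈ Finset.Ico L P, max (y i) 0 ∧
      ∀ j ≤ P, ∑ i ∈ Finset.Ico L j, max (y i) 0 ≤ c + δ := by
  classical
  have hex : ∃ P, L ≤ P ∧ c ≤ ∑ i ∈ Finset.Ico L P, max (y i) 0 := by
    have htop := (not_summable_iff_tendsto_nat_atTop_of_nonneg
      (fun n => le_max_right (y n) 0)).1 hy
    obtain ⟨P, hP, hLP⟩ := ((htop.eventually_ge_atTop
      (c + ∑ i ∈ Finset.range L, max (y i) 0)).and (eventually_ge_atTop L)).exists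
    refine ⟨P, hLP, ?_⟩
    rw [Finset.sum_Ico_eq_sub _ hLP]
    linarith
  have hspec := Nat.find_spec hex
  have hmin : ∀ j, L ≤ j → j < Nat.find hex → ∑ i ∈ Finset.Ico L j, max (y i) 0 < c :=
    fun j hLj hj => not_le.1 fun h => Nat.find_min hex hj ⟨hLj, h⟩
  generalize Nat.find hex = P at hspec hmin
  obtain ⟨hLP, hcP⟩ := hspec
  have hlt : L < P := by
    refine lt_of_le_of_ne hLP ?_
    rintro rfl
    simp at hcP
    linarith
  refine ⟨P, hlt, hcP, fun j hj => ?_⟩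
  rcases lt_or_ge j L with hjL | hLj
  · rw [Finset.Ico_eq_empty_of_le hjL.le, Finset.sum_empty]
    positivity
  rcases hj.lt_or_eq with hj | rfl
  · linarith [hmin j hLj hj]
  · obtain ⟨k, rfl⟩ : ∃ k, j = k + 1 := ⟨j - 1, by omega⟩
    have hLk : L ≤ k := by omega
    rw [Finset.sum_Ico_succ_top hLk]
    have := hmin k hLk (by omega)
    have := max_le (hle k hLk) hδ
    linarith

/-- For a conditionally convergent series, there is a finite stretch of indices, beginning at any
given index, and a selection of its terms whose running sums reach `c`, never exceed `c + δ` in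
absolute value, and end within `δ` of zero. -/
lemma exists_excursion {x : ℕ → ℝ}
    (hconv : ∃ s, Tendsto (fun N => ∑ n ∈ Finset.range N, x n) atTop (𝓝 s))
    (hnabs : ¬ Summable fun n => |x n|) (N : ℕ) {c δ : ℝ} (hc : 0 < c) (hδ : 0 < δ) :
    ∃ M, N < M ∧ ∃ A : Set ℕ,
      (∀ j, N ≤ j → j ≤ M → |∑ i ∈ Finset.Ico N j, A.indicator x i| ≤ c + δ) ∧
      |∑ i ∈ Finset.Ico N M, A.indicator x i| ≤ δ ∧
      ∃ j, N ≤ j ∧ j ≤ M ∧ c ≤ ∑ i ∈ Finset.Ico N j, A.indicator x i := by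
  classical
  have hpos := not_summable_max_zero hconv hnabs
  have hneg : ¬ Summable fun n => max (-x n) 0 := by
    refine not_summable_max_zero (x := fun n => -x n) ?_ (by simpa using hnabs)
    obtain ⟨s, hs⟩ := hconv
    exact ⟨-s, by simpa using hs.neg⟩
  obtain ⟨L, hNL, hsmall⟩ : ∃ L, N ≤ L ∧ ∀ i, L ≤ i → |x i| ≤ δ := by
    obtain ⟨s, hs⟩ := hconv
    have hzero : Tendsto x atTop (𝓝 0) := by
      have := (hs.comp (tendsto_add_atTop_nat 1)).sub hs
      simpa [Function.comp_def, Finset.sum_range_succ] using this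
    obtain ⟨L, hL⟩ := Metric.tendsto_atTop.1 hzero δ hδ
    refine ⟨max N L, le_max_left _ _, fun i hi => ?_⟩
    simpa using (hL i ((le_max_right _ _).trans hi)).le
  obtain ⟨P, hLP, hcP, hbP⟩ := exists_sum_Ico_max_zero hpos hc hδ.le
    fun i hi => (le_abs_self _).trans (hsmall i hi)
  set s := ∑ i ∈ Finset.Ico L P, max (x i) 0 with hs
  obtain ⟨M, hPM, hcM, hbM⟩ := exists_sum_Ico_max_zero hneg (hc.trans_le hcP) hδ.le
    fun i hi => (neg_le_abs _).trans (hsmall i (hLP.le.trans hi))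
  let A : Set ℕ := {i | L ≤ i ∧ (i < P ∧ 0 < x i ∨ P ≤ i ∧ x i < 0)}
  have hwait : ∀ j, j ≤ L → ∑ i ∈ Finset.Ico N j, A.indicator x i = 0 := by
    intro j hj
    refine Finset.sum_eq_zero fun i hi => Set.indicator_of_notMem (fun h => ?_) _
    exact absurd h.1 (by have := Finset.mem_Ico.1 hi; omega)
  have hup : ∀ j, L ≤ j → j ≤ P →
      ∑ i ∈ Finset.Ico N j, A.indicator x i = ∑ i ∈ Finset.Ico L j, max (x i) 0 := by
    intro j hLj hj
    rw [← Finset.sum_Ico_consecutive _ hNL hLj, hwait L le_rfl, zero_add]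
    refine Finset.sum_congr rfl fun i hi => ?_
    obtain ⟨h1, h2⟩ := Finset.mem_Ico.1 hi
    have h3 : i < P := h2.trans_le hj
    by_cases h : 0 < x i
    · rw [Set.indicator_of_mem (show i ∈ A from ⟨h1, Or.inl ⟨h3, h⟩⟩), max_eq_left h.le]
    · rw [Set.indicator_of_notMem (show i ∉ A from fun hA => ?_), max_eq_right (not_lt.1 h)]
      rcases hA.2 with hA | hA
      · exact h hA.2
      · omega
  have hdown : ∀ j, P ≤ j →
      ∑ i ∈ Finset.Ico N j, A.indicator x i = s - ∑ i ∈ Finset.Ico P j, max (-x i) 0 := by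
    intro j hj
    rw [← Finset.sum_Ico_consecutive _ (hNL.trans hLP.le) hj, hup P hLP.le le_rfl, ← hs,
      sub_eq_add_neg, ← Finset.sum_neg_distrib]
    congr 1
    refine Finset.sum_congr rfl fun i hi => ?_
    obtain ⟨h1, h2⟩ := Finset.mem_Ico.1 hi
    by_cases h : x i < 0
    · rw [Set.indicator_of_mem (show i ∈ A from ⟨hLP.le.trans h1, Or.inr ⟨h1, h⟩⟩),
        max_eq_left (by linarith), neg_neg]
    · rw [Set.indicator_of_notMem (show i ∉ A from fun hA => ?_), max_eq_right (by linarith),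
        neg_zero]
      rcases hA.2 with hA | hA
      · omega
      · exact h hA.2
  have hnonneg : ∀ (y : ℕ → ℝ) (a b : ℕ), 0 ≤ ∑ i ∈ Finset.Ico a b, max (y i) 0 :=
    fun y a b => Finset.sum_nonneg fun i _ => le_max_right _ _
  refine ⟨M, by omega, A, fun j _ hjM => ?_, ?_, P, by omega, hPM.le, ?_⟩
  · rcases le_total j L with hjL | hLj
    · rw [hwait j hjL, abs_zero]
      positivity
    rcases le_total j P with hjP | hPj
    · rw [hup j hLj hjP, abs_of_nonneg (hnonneg x L j)]
      exact hbP j hjP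
    · rw [hdown j hPj, abs_le]
      have h1 := hbM j hjM
      have h2 := hnonneg (fun i => -x i) P j
      have h3 := hbP P le_rfl
      constructor <;> linarith
  · rw [hdown M hPM.le, abs_le]
    have h1 := hbM M le_rfl
    constructor <;> linarith
  · rw [hup P hLP.le le_rfl]
    exact hcP

/-- The set of selectors along which a series of reals converges is `F_{σδ}`. -/
lemma setOf_convergent_subseries_eq_iInter_iUnion (x : ℕ → ℝ) :
    ∃ F : ℕ → ℕ → Set (ℕ → Bool), (∀ i j, IsClosed (F i j)) ∧
      {ε : ℕ → Bool | ∃ s,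
          Tendsto (fun N => ∑ n ∈ Finset.range N, if ε n then x n else 0) atTop (𝓝 s)}
        = ⋂ i, ⋃ j, F i j := by
  let S : ℕ → (ℕ → Bool) → ℝ := fun N ε => ∑ n ∈ Finset.range N, if ε n then x n else 0
  have hS : ∀ N, Continuous (S N) := fun N =>
    continuous_finsetSum _ fun n _ =>
      (continuous_of_discreteTopology (f := fun b : Bool => if b then x n else 0)).comp
        (continuous_apply n)
  refine ⟨fun i j => ⋂ p ≥ j, {ε | dist (S p ε) (S j ε) ≤ 1 / ((i : ℝ) + 1)},
    fun i j => isClosed_biInter fun p _ =>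
      isClosed_le ((hS p).dist (hS j)) continuous_const, ?_⟩
  ext ε
  simp only [Set.mem_ofPred_eq, Set.mem_iInter, Set.mem_iUnion]
  constructor
  · rintro ⟨s, hs⟩ i
    obtain ⟨j, hj⟩ := Metric.cauchySeq_iff'.1 hs.cauchySeq (1 / ((i : ℝ) + 1))
      Nat.one_div_pos_of_nat
    exact ⟨j, fun p hp => (hj p hp).le⟩
  · intro h
    refine cauchySeq_tendsto_of_complete (Metric.cauchySeq_iff'.2 fun e he => ?_)
    obtain ⟨i, hi⟩ := exists_nat_one_div_lt he
    obtain ⟨j, hj⟩ := h i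
    exact ⟨j, fun p hp => (hj p hp).trans_lt hi⟩

/-- For a conditionally convergent series, divergence to infinity in the Baire space reduces
continuously to convergence of subseries. -/
lemma exists_continuous_convergent_subseries_iff {x : ℕ → ℝ}
    (hconv : ∃ s, Tendsto (fun N => ∑ n ∈ Finset.range N, x n) atTop (𝓝 s))
    (hnabs : ¬ Summable fun n => |x n|) :
    ∃ ψ : (ℕ → ℕ) → (ℕ → Bool), Continuous ψ ∧ ∀ v : ℕ → ℕ,
      ((∃ s, Tendsto (fun N => ∑ n ∈ Finset.range N, if ψ v n then x n else 0)
          atTop (𝓝 s))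
        ↔ Tendsto v atTop atTop) := by
  classical
  let c : ℕ → ℝ := fun m => 1 / ((m.unpair.2 : ℝ) + 1)
  let δ : ℕ → ℝ := fun m => (1 / 2) ^ m
  have hc : ∀ m, 0 < c m := fun m => Nat.one_div_pos_of_nat
  have hδ : ∀ m, 0 < δ m := fun m => by positivity
  choose next hnext B hbound hend hpeak using
    fun N m => exists_excursion hconv hnabs N (hc m) (hδ m)
  -- The `m`-th excursion occupies `[b m, b (m + 1))`.
  let b : ℕ → ℕ := fun m => Nat.rec 0 (fun m N => next N m) m
  have hb : StrictMono b := strictMono_nat_of_lt_succ fun m => hnext (b m) m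
  let A : ℕ → Set ℕ := fun m => B (b m) m
  -- The excursion coded by `(n, k)` is performed exactly when `v n = k`.
  let on : (ℕ → ℕ) → ℕ → Prop := fun v m => v m.unpair.1 = m.unpair.2
  have huniq : ∀ {i l m}, b l ≤ i → i < b (l + 1) → b m ≤ i → i < b (m + 1) → l = m := by
    intro i l m h1 h2 h3 h4
    have h5 : l < m + 1 := hb.lt_iff_lt.1 (h1.trans_lt h4)
    have h6 : m < l + 1 := hb.lt_iff_lt.1 (h3.trans_lt h2)
    omega
  have hblock : ∀ N, ∃ m, b m ≤ N ∧ N < b (m + 1) := by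
    intro N
    obtain ⟨m, hm⟩ : ∃ m, N < b (m + 1) := ⟨N, hb.id_le (N + 1)⟩
    induction m with
    | zero => exact ⟨0, Nat.zero_le _, hm⟩
    | succ m ih =>
      rcases lt_or_ge N (b (m + 1)) with h | h
      · exact ih h
      · exact ⟨m + 1, h, hm⟩
  choose blk hblk_le hblk_lt using hblock
  let ψ : (ℕ → ℕ) → ℕ → Bool := fun v i => decide (i ∈ A (blk i) ∧ on v (blk i))
  refine ⟨ψ, continuous_pi fun i => ?_, fun v => ?_⟩
  · exact (continuous_of_discreteTopology
      (f := fun k : ℕ => decide (i ∈ A (blk i) ∧ k = (blk i).unpair.2))).comp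
        (continuous_apply (blk i).unpair.1)
  set S : ℕ → ℝ := fun N => ∑ n ∈ Finset.range N, if ψ v n then x n else 0 with hS
  have hincr : ∀ m j, b m ≤ j → j ≤ b (m + 1) →
      S j - S (b m) = if on v m then ∑ i ∈ Finset.Ico (b m) j, (A m).indicator x i else 0 := by
    intro m j h1 h2
    have hterm : ∀ i ∈ Finset.Ico (b m) j,
        (if ψ v i then x i else 0) = if on v m then (A m).indicator x i else 0 := by
      intro i hi
      obtain ⟨h3, h4⟩ := Finset.mem_Ico.1 hi
      have hm : blk i = m := huniq (hblk_le i) (hblk_lt i) h3 (h4.trans_le h2)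
      by_cases hA : i ∈ A m <;> by_cases ho : on v m <;> simp [ψ, hm, hA, ho]
    rw [hS, ← Finset.sum_Ico_eq_sub _ h1, Finset.sum_congr rfl hterm]
    split_ifs <;> simp
  constructor
  · rintro ⟨s, hs⟩
    rw [tendsto_atTop]
    by_contra! hcon
    obtain ⟨K, hK⟩ := hcon
    have hK' : (0 : ℝ) < 1 / ((K : ℝ) + 1) := Nat.one_div_pos_of_nat
    obtain ⟨N, hN⟩ := Metric.cauchySeq_iff.1 hs.cauchySeq _ hK'
    obtain ⟨n, hn, hvn⟩ := (frequently_atTop.1 hK) N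
    set m := Nat.pair n (v n) with hm
    have hon : on v m := by simp [on, hm]
    obtain ⟨j, hj1, hj2, hj⟩ := hpeak (b m) m
    have hNm : N ≤ b m := hn.trans ((Nat.left_le_pair n (v n)).trans (hb.id_le m))
    have hd := hN j (hNm.trans hj1) (b m) hNm
    have hcm : 1 / ((K : ℝ) + 1) ≤ c m := by
      have : m.unpair.2 = v n := by simp [hm]
      simp only [c, this]
      have : (v n : ℝ) ≤ K := by exact_mod_cast hvn.le
      gcongr
    have heq := hincr m j hj1 hj2
    rw [if_pos hon] at heq
    rw [Real.dist_eq] at hd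
    have := (le_abs_self _).trans_lt hd
    change S j - S (b m) < _ at this
    linarith
  · intro hv
    have hincr_le : ∀ m, |S (b (m + 1)) - S (b m)| ≤ δ m := by
      intro m
      rw [hincr m _ (hb (Nat.lt_succ_self m)).le le_rfl]
      split_ifs
      · exact hend (b m) m
      · simpa using (hδ m).le
    obtain ⟨s, hs⟩ : ∃ s, Tendsto (fun m => S (b m)) atTop (𝓝 s) := by
      refine cauchySeq_tendsto_of_complete (cauchySeq_of_le_geometric (1 / 2) 1 (by norm_num) ?_)
      intro m
      rw [dist_comm, Real.dist_eq, one_mul]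
      exact hincr_le m
    refine ⟨s, Metric.tendsto_atTop.2 fun e he => ?_⟩
    have hfin : ∀ K : ℕ, ∀ᶠ m in atTop, on v m → K ≤ m.unpair.2 := by
      intro K
      obtain ⟨n₀, hn₀⟩ := eventually_atTop.1 (hv.eventually_ge_atTop K)
      rw [← Nat.cofinite_eq_atTop, eventually_cofinite]
      refine ((Finset.range n₀).image fun n => Nat.pair n (v n)).finite_toSet.subset ?_
      intro m hm
      rw [Set.mem_ofPred_eq, Classical.not_imp] at hm
      obtain ⟨hon, hlt⟩ := hm
      have hon : v m.unpair.1 = m.unpair.2 := hon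
      rw [Finset.mem_coe, Finset.mem_image]
      refine ⟨m.unpair.1, Finset.mem_range.2 (not_le.1 fun h => hlt ?_), ?_⟩
      · exact hon ▸ hn₀ _ h
      · rw [hon, Nat.pair_unpair]
    obtain ⟨K, hK⟩ := exists_nat_one_div_lt (show 0 < e / 3 by positivity)
    have hδlim : Tendsto δ atTop (𝓝 0) :=
      tendsto_pow_atTop_nhds_zero_of_lt_one (by norm_num) (by norm_num)
    obtain ⟨m₀, hm₀⟩ := eventually_atTop.1 ((hfin K).and
      ((hδlim.eventually_lt_const (show 0 < e / 3 by positivity)).and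
        (Metric.tendsto_nhds.1 hs (e / 3) (by positivity))))
    refine ⟨b m₀, fun N hN => ?_⟩
    have hle : m₀ ≤ blk N :=
      Nat.lt_succ_iff.1 (hb.lt_iff_lt.1 (hN.trans_lt (hblk_lt N)))
    obtain ⟨h1, h2, h3⟩ := hm₀ _ hle
    have hosc : |S N - S (b (blk N))| < e / 3 + e / 3 := by
      rw [hincr _ N (hblk_le N) (hblk_lt N).le]
      split_ifs with hon
      · refine (hbound (b (blk N)) (blk N) N (hblk_le N) (hblk_lt N).le).trans_lt ?_
        refine add_lt_add (lt_of_le_of_lt ?_ hK) h2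
        have : (K : ℝ) ≤ (blk N).unpair.2 := by exact_mod_cast h1 hon
        simp only [c]
        gcongr
      · rw [abs_zero]
        positivity
    have htri := dist_triangle (S N) (S (b (blk N))) s
    rw [Real.dist_eq (S N) (S (b (blk N)))] at htri
    change dist (S N) s < e
    linarith

/-- For a conditionally convergent real series `∑ x_n`, the set
`E = {ε ∈ {0,1}^ℕ : ∑ ε_n x_n converges}` is an `F_{σδ}` subset of the Cantor space, and
there is a continuous `ψ : ℕ^ℕ → {0,1}^ℕ` with `ψ(v) ∈ E ↔ v(n) → ∞`. -/
theorem stmt_12 (x : ℕ → ℝ)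
    (hconv : ∃ s, Tendsto (fun N => ∑ n ∈ Finset.range N, x n) atTop (𝓝 s))
    (hnabs : ¬ Summable fun n => |x n|) :
    (∃ F : ℕ → ℕ → Set (ℕ → Bool), (∀ i j, IsClosed (F i j)) ∧
      {ε : ℕ → Bool | ∃ s,
          Tendsto (fun N => ∑ n ∈ Finset.range N, if ε n then x n else 0) atTop (𝓝 s)}
        = ⋂ i, ⋃ j, F i j) ∧
    (∃ ψ : (ℕ → ℕ) → (ℕ → Bool), Continuous ψ ∧ ∀ v : ℕ → ℕ,
      ((∃ s, Tendsto (fun N => ∑ n ∈ Finset.range N, if ψ v n then x n else 0)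
          atTop (𝓝 s))
        ↔ Tendsto v atTop atTop)) :=
  ⟨setOf_convergent_subseries_eq_iInter_iUnion x,
    exists_continuous_convergent_subseries_iff hconv hnabs⟩
end

section
/- Let ∑ x_n be a conditionally convergent series in ℝ, and let ∑ y_n be an absolutely convergent series in ℝ such that the map ε ↦ ∑_n ε(n)·y(n) from {0,1}^ℕ to ℝ is injective. Then the achievement set A((x_n, y_n)_n) ⊆ ℝ² of the sequence of pairs is a Borel set which is neither a G_δ set nor an F_σ set. -/
open Filter Topology

/-- The `N`-th partial sum of the subseries of `∑ x n` selected by `ε`. -/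
noncomputable def subsum (x : ℕ → ℝ) (ε : ℕ → Bool) (N : ℕ) : ℝ :=
  ∑ n ∈ Finset.range N, if ε n then x n else 0

theorem subsum_succ (x : ℕ → ℝ) (ε : ℕ → Bool) (N : ℕ) :
    subsum x ε (N + 1) = subsum x ε N + if ε N then x N else 0 :=
  Finset.sum_range_succ _ _

theorem continuous_subsum (x : ℕ → ℝ) (N : ℕ) : Continuous fun ε => subsum x ε N := by
  unfold subsum
  refine continuous_finsetSum _ fun n _ => ?_
  exact (continuous_of_discreteTopology (f := fun b : Bool => if b then x n else 0)).comp
    (continuous_apply n)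

/-- Selections together with the sums of the convergent subseries they select. -/
def subsumGraph (x : ℕ → ℝ) : Set ((ℕ → Bool) × ℝ) :=
  {p | Tendsto (subsum x p.1) atTop (𝓝 p.2)}

/-! ### Oscillating subseries -/

/-- A greedy walk along `w`, starting at index `L`: the current subsum, and whether positive
(`true`) or negative (`false`) terms are currently being selected. The direction is
reversed upon leaving the interval `(0, η)`. -/
noncomputable def greedyWalk (w : ℕ → ℝ) (L : ℕ) (η : ℝ) : ℕ → ℝ × Bool
  | 0 => (0, true)
  | n + 1 =>
    let p := greedyWalk w L η n
    let t := p.1 + if L ≤ n ∧ p.2 = decide (0 < w n) then w n else 0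
    (t, if η ≤ t then false else if t ≤ 0 then true else p.2)

theorem not_bddAbove_sum_posPart {w : ℕ → ℝ}
    (hw : BddAbove (Set.range fun N => |∑ n ∈ Finset.range N, w n|))
    (hwa : ¬ Summable fun n => |w n|) (C : ℝ) :
    ∃ N, C < ∑ n ∈ Finset.range N, if 0 < w n then w n else 0 := by
  obtain ⟨B, hB⟩ := hw
  by_contra! h
  refine hwa (summable_of_sum_range_le (c := 2 * C + B) (fun n => abs_nonneg _) fun N => ?_)
  have h1 : ∑ n ∈ Finset.range N, |w n| =
      2 * (∑ n ∈ Finset.range N, if 0 < w n then w n else 0) - ∑ n ∈ Finset.range N, w n := by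
    rw [Finset.mul_sum, ← Finset.sum_sub_distrib]
    refine Finset.sum_congr rfl fun n _ => ?_
    split_ifs with h0
    · rw [abs_of_pos h0]; ring
    · rw [abs_of_nonpos (not_lt.1 h0)]; ring
  have h2 := hB ⟨N, rfl⟩
  have h3 := neg_abs_le (∑ n ∈ Finset.range N, w n)
  have h4 := h N
  simp only at h2
  linarith

theorem not_bddBelow_sum_negPart {w : ℕ → ℝ}
    (hw : BddAbove (Set.range fun N => |∑ n ∈ Finset.range N, w n|))
    (hwa : ¬ Summable fun n => |w n|) (C : ℝ) :
    ∃ N, ∑ n ∈ Finset.range N, (if 0 < w n then 0 else w n) < C := by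
  obtain ⟨B, hB⟩ := id hw
  obtain ⟨N, hN⟩ := not_bddAbove_sum_posPart hw hwa (B - C)
  refine ⟨N, ?_⟩
  have h1 : ∑ n ∈ Finset.range N, w n = (∑ n ∈ Finset.range N, if 0 < w n then w n else 0) +
      ∑ n ∈ Finset.range N, if 0 < w n then 0 else w n := by
    rw [← Finset.sum_add_distrib]
    refine Finset.sum_congr rfl fun n _ => ?_
    split_ifs <;> simp
  have h2 := hB ⟨N, rfl⟩
  have h3 := le_abs_self (∑ n ∈ Finset.range N, w n)
  simp only at h2
  linarith

theorem greedyWalk_fst_mem_Icc {w : ℕ → ℝ} {L : ℕ} {η τ : ℝ} (hη : 0 < η) (hτ : 0 < τ)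
    (hL : ∀ n, L ≤ n → |w n| ≤ τ) (n : ℕ) :
    (greedyWalk w L η n).1 ∈ Set.Icc (-τ) (η + τ) ∧
      ((greedyWalk w L η n).2 = true → (greedyWalk w L η n).1 < η) ∧
      ((greedyWalk w L η n).2 = false → 0 < (greedyWalk w L η n).1) := by
  induction n with
  | zero => simp [greedyWalk, hη]; constructor <;> linarith
  | succ n ih =>
    obtain ⟨⟨h1, h2⟩, h3, h4⟩ := ih
    simp only [greedyWalk]
    set p := greedyWalk w L η n
    have key : p.1 + (if L ≤ n ∧ p.2 = decide (0 < w n) then w n else 0) ∈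
        Set.Icc (-τ) (η + τ) := by
      split_ifs with h
      · have hw := abs_le.1 (hL n h.1)
        by_cases hpos : 0 < w n
        · have := h3 (by simpa [hpos] using h.2)
          constructor <;> linarith
        · have := h4 (by simpa [hpos] using h.2)
          constructor <;> linarith
      · constructor <;> linarith
    refine ⟨key, ?_⟩
    generalize p.1 + (if L ≤ n ∧ p.2 = decide (0 < w n) then w n else 0) = t
    constructor
    · split_ifs with ha hb
      · simp
      · intro _; linarith
      · intro _; linarith
    · split_ifs with ha hb
      · intro _; linarith
      · simp
      · intro _; linarith

/-- A walk with bounded values does not keep its direction forever. -/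
theorem frequently_greedyWalk_snd {w : ℕ → ℝ} {L : ℕ} {η τ : ℝ} (hη : 0 < η) (hτ : 0 < τ)
    (hL : ∀ n, L ≤ n → |w n| ≤ τ)
    (hw : BddAbove (Set.range fun N => |∑ n ∈ Finset.range N, w n|))
    (hwa : ¬ Summable fun n => |w n|) (d : Bool) :
    ∃ᶠ n in atTop, (greedyWalk w L η n).2 = d := by
  intro hev
  obtain ⟨m, hm⟩ := eventually_atTop.1 (hev.and (eventually_ge_atTop L))
  have hlow := fun n => (greedyWalk_fst_mem_Icc hη hτ hL n).1
  cases d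
  · have hsum : ∀ n, m ≤ n → (greedyWalk w L η n).1 - (greedyWalk w L η m).1 =
        (∑ k ∈ Finset.range n, if 0 < w k then w k else 0) -
        ∑ k ∈ Finset.range m, if 0 < w k then w k else 0 := by
      intro n hn
      induction n, hn using Nat.le_induction with
      | base => simp
      | succ n hn ih =>
        obtain ⟨h1, h2⟩ := hm n hn
        have h1 : (greedyWalk w L η n).2 = true := by simpa using h1
        rw [Finset.sum_range_succ]
        simp only [greedyWalk, h1, h2, true_and]
        by_cases h : 0 < w n <;> simp [h] <;> linarith
    obtain ⟨N, hN⟩ := not_bddAbove_sum_posPart hw hwa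
      ((∑ k ∈ Finset.range m, if 0 < w k then w k else 0) + η + 2 * τ)
    have hmono : (∑ k ∈ Finset.range N, if 0 < w k then w k else 0) ≤
        ∑ k ∈ Finset.range (max m N), if 0 < w k then w k else 0 := by
      refine Finset.sum_le_sum_of_subset_of_nonneg (by simp) fun k _ _ => ?_
      split_ifs with h
      · exact h.le
      · exact le_rfl
    have := hsum (max m N) (le_max_left _ _)
    have h1 := (hlow (max m N)).2
    have h2 := (hlow m).1
    linarith
  · have hsum : ∀ n, m ≤ n → (greedyWalk w L η n).1 - (greedyWalk w L η m).1 =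
        (∑ k ∈ Finset.range n, if 0 < w k then 0 else w k) -
        ∑ k ∈ Finset.range m, if 0 < w k then 0 else w k := by
      intro n hn
      induction n, hn using Nat.le_induction with
      | base => simp
      | succ n hn ih =>
        obtain ⟨h1, h2⟩ := hm n hn
        have h1 : (greedyWalk w L η n).2 = false := by simpa using h1
        rw [Finset.sum_range_succ]
        simp only [greedyWalk, h1, h2, true_and]
        by_cases h : 0 < w n <;> simp [h] <;> linarith
    obtain ⟨N, hN⟩ := not_bddBelow_sum_negPart hw hwa
      ((∑ k ∈ Finset.range m, if 0 < w k then 0 else w k) - η - 2 * τ)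
    have hmono : (∑ k ∈ Finset.range (max m N), if 0 < w k then 0 else w k) ≤
        ∑ k ∈ Finset.range N, if 0 < w k then 0 else w k := by
      rw [← neg_le_neg_iff, ← Finset.sum_neg_distrib, ← Finset.sum_neg_distrib]
      refine Finset.sum_le_sum_of_subset_of_nonneg (by simp) fun k _ _ => ?_
      split_ifs with h
      · simp
      · linarith
    have := hsum (max m N) (le_max_left _ _)
    have h1 := (hlow (max m N)).1
    have h2 := (hlow m).2
    linarith

theorem frequently_le_greedyWalk_fst {w : ℕ → ℝ} {L : ℕ} {η τ : ℝ} (hη : 0 < η) (hτ : 0 < τ)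
    (hL : ∀ n, L ≤ n → |w n| ≤ τ)
    (hw : BddAbove (Set.range fun N => |∑ n ∈ Finset.range N, w n|))
    (hwa : ¬ Summable fun n => |w n|) :
    ∃ᶠ n in atTop, η ≤ (greedyWalk w L η n).1 := by
  intro hev
  obtain ⟨m, hm⟩ := eventually_atTop.1 hev
  obtain ⟨n, hn, hd⟩ := frequently_atTop.1
    (frequently_greedyWalk_snd hη hτ hL hw hwa true) m
  refine frequently_greedyWalk_snd hη hτ hL hw hwa false (eventually_atTop.2 ⟨n, fun k hk => ?_⟩)
  suffices (greedyWalk w L η k).2 = true by simp [this]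
  induction k, hk using Nat.le_induction with
  | base => exact hd
  | succ k hk ih =>
    have := hm (k + 1) (by omega)
    simp only [greedyWalk] at this ⊢
    rw [if_neg this, ih, ite_self]

theorem frequently_greedyWalk_fst_nonpos {w : ℕ → ℝ} {L : ℕ} {η τ : ℝ} (hη : 0 < η)
    (hτ : 0 < τ) (hL : ∀ n, L ≤ n → |w n| ≤ τ)
    (hw : BddAbove (Set.range fun N => |∑ n ∈ Finset.range N, w n|))
    (hwa : ¬ Summable fun n => |w n|) :
    ∃ᶠ n in atTop, (greedyWalk w L η n).1 ≤ 0 := by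
  intro hev
  obtain ⟨m, hm⟩ := eventually_atTop.1 hev
  obtain ⟨n, hn, hd⟩ := frequently_atTop.1
    (frequently_greedyWalk_snd hη hτ hL hw hwa false) m
  refine frequently_greedyWalk_snd hη hτ hL hw hwa true (eventually_atTop.2 ⟨n, fun k hk => ?_⟩)
  suffices (greedyWalk w L η k).2 = false by simp [this]
  induction k, hk using Nat.le_induction with
  | base => exact hd
  | succ k hk ih =>
    have := hm (k + 1) (by omega)
    simp only [greedyWalk] at this ⊢
    rw [if_neg this, ih, ite_self]

/-- A conditionally convergent series has subseries, supported on arbitrarily late indices,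
whose partial sums oscillate across the interval `[0, η]` without leaving it by more than `τ`. -/
theorem exists_oscillating_subsum {w : ℕ → ℝ}
    (hw : ∃ s, Tendsto (fun N => ∑ n ∈ Finset.range N, w n) atTop (𝓝 s))
    (hwa : ¬ Summable fun n => |w n|) (L : ℕ) {η τ : ℝ} (hη : 0 < η) (hτ : 0 < τ) :
    ∃ b : ℕ → Bool, (∀ n < L, b n = false) ∧
      (∀ n, subsum w b n ∈ Set.Icc (-τ) (η + τ)) ∧
      (∃ᶠ n in atTop, η ≤ subsum w b n) ∧ ∃ᶠ n in atTop, subsum w b n ≤ 0 := by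
  obtain ⟨s, hs⟩ := hw
  have h0 : Tendsto w atTop (𝓝 0) := by
    have := ((tendsto_add_atTop_iff_nat 1).2 hs).sub hs
    simpa [Finset.sum_range_succ] using this
  have hbdd : BddAbove (Set.range fun N => |∑ n ∈ Finset.range N, w n|) := hs.abs.bddAbove_range
  obtain ⟨K, hK⟩ := eventually_atTop.1 (h0.abs.eventually (gt_mem_nhds (by simpa using hτ)))
  have hK' : ∀ n, max L K ≤ n → |w n| ≤ τ := fun n hn => (hK n (le_trans (le_max_right _ _) hn)).le
  let b : ℕ → Bool := fun n =>
    decide (max L K ≤ n ∧ (greedyWalk w (max L K) η n).2 = decide (0 < w n))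
  have hb : subsum w b = fun n => (greedyWalk w (max L K) η n).1 := by
    funext n
    induction n with
    | zero => simp [subsum, greedyWalk]
    | succ n ih => rw [subsum_succ, ih]; simp only [greedyWalk, b, decide_eq_true_eq]
  refine ⟨b, fun n hn => ?_, ?_, ?_, ?_⟩
  · simp only [b, decide_eq_false_iff_not, not_and]
    intro h
    exact absurd (le_trans (le_max_left _ _) h) (by omega)
  · rw [hb]; exact fun n => (greedyWalk_fst_mem_Icc hη hτ hK' n).1
  · rw [hb]; exact frequently_le_greedyWalk_fst hη hτ hK' hbdd hwa
  · rw [hb]; exact frequently_greedyWalk_fst_nonpos hη hτ hK' hbdd hwa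

/-! ### Perturbing a selection -/

/-- The terms gained by switching single entries of the selection `ε`. -/
def switchTerm (x : ℕ → ℝ) (ε : ℕ → Bool) (n : ℕ) : ℝ := if ε n then -x n else x n

theorem subsum_xor (x : ℕ → ℝ) (ε b : ℕ → Bool) (N : ℕ) :
    subsum x (fun n => xor (ε n) (b n)) N = subsum x ε N + subsum (switchTerm x ε) b N := by
  simp only [subsum, ← Finset.sum_add_distrib]
  refine Finset.sum_congr rfl fun n _ => ?_
  by_cases hε : ε n = true <;> by_cases hb : b n = true <;> simp [switchTerm, hε, hb]

theorem subsum_truncate (w : ℕ → ℝ) (b : ℕ → Bool) (M N : ℕ) :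
    subsum w (fun n => decide (n < M) && b n) N = subsum w b (min M N) := by
  induction N with
  | zero => simp [subsum]
  | succ N ih =>
    rw [subsum_succ, ih]
    by_cases h : N < M
    · rw [min_eq_right h.le, min_eq_right (Nat.succ_le_of_lt h), subsum_succ]; simp [h]
    · rw [min_eq_left (not_lt.1 h), min_eq_left (by omega)]; simp [h]

theorem exists_oscillating_switch {x : ℕ → ℝ}
    (hx : ∃ s, Tendsto (fun N => ∑ n ∈ Finset.range N, x n) atTop (𝓝 s))
    (hxa : ¬ Summable fun n => |x n|) {ε : ℕ → Bool} {s : ℝ}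
    (hε : Tendsto (subsum x ε) atTop (𝓝 s)) (L : ℕ) {η τ : ℝ} (hη : 0 < η) (hτ : 0 < τ) :
    ∃ b : ℕ → Bool, (∀ n < L, b n = false) ∧
      (∀ n, subsum (switchTerm x ε) b n ∈ Set.Icc (-τ) (η + τ)) ∧
      (∃ᶠ n in atTop, η ≤ subsum (switchTerm x ε) b n) ∧
      ∃ᶠ n in atTop, subsum (switchTerm x ε) b n ≤ 0 := by
  obtain ⟨t, ht⟩ := hx
  refine exists_oscillating_subsum ⟨t - 2 * s, ?_⟩ ?_ L hη hτ
  · refine (ht.sub (hε.const_mul 2)).congr fun N => ?_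
    simp only [subsum, Finset.mul_sum, ← Finset.sum_sub_distrib]
    refine Finset.sum_congr rfl fun n _ => ?_
    cases h : ε n <;> simp [switchTerm, h]; ring
  · convert hxa using 3 with n
    cases h : ε n <;> simp [switchTerm, h]

theorem exists_prefix_subset_of_mem_nhds {ε : ℕ → Bool} {V : Set (ℕ → Bool)} (hV : V ∈ 𝓝 ε) :
    ∃ L, ∀ δ : ℕ → Bool, (∀ n < L, δ n = ε n) → δ ∈ V := by
  by_contra! h
  choose δ hδ hδV using h
  have : Tendsto δ atTop (𝓝 ε) := tendsto_pi_nhds.2 fun n =>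
    tendsto_const_nhds.congr' <| (eventually_gt_atTop n).mono fun L hL => (hδ L n hL).symm
  obtain ⟨L, hL⟩ := (this.eventually hV).exists
  exact hδV L hL

theorem tendsto_subsum_truncate {x : ℕ → ℝ} {ε b : ℕ → Bool} {s : ℝ}
    (hε : Tendsto (subsum x ε) atTop (𝓝 s)) (M : ℕ) :
    Tendsto (subsum x fun n => xor (ε n) (decide (n < M) && b n)) atTop
      (𝓝 (s + subsum (switchTerm x ε) b M)) := by
  refine (hε.add_const _).congr' ?_
  filter_upwards [eventually_ge_atTop M] with N hN
  rw [subsum_xor, subsum_truncate, min_eq_left hN]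

/-! ### Complexity of the graph -/

theorem measurableSet_subsumGraph (x : ℕ → ℝ) : MeasurableSet (subsumGraph x) :=
  MeasureTheory.measurableSet_tendsto_fun
    (fun N => ((continuous_subsum x N).comp continuous_fst).measurable) measurable_snd

theorem not_isGδ_subsumGraph {x : ℕ → ℝ}
    (hx : ∃ s, Tendsto (fun N => ∑ n ∈ Finset.range N, x n) atTop (𝓝 s))
    (hxa : ¬ Summable fun n => |x n|) : ¬ IsGδ (subsumGraph x) := by
  intro hG
  have := hG.baireSpace_of_t2Space_locallyCompactSpace
  have : Nonempty (subsumGraph x) :=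
    ⟨⟨(fun _ => false, 0), tendsto_const_nhds.congr fun N => by simp [subsum]⟩⟩
  let E : ℕ → Set (subsumGraph x) := fun N => {p | ∀ M, N ≤ M → |subsum x p.1.1 M - p.1.2| ≤ 1}
  have hEc : ∀ N, IsClosed (E N) := fun N => by
    simp only [E, Set.ofPred_forall]
    refine isClosed_iInter fun M => isClosed_iInter fun _ => isClosed_le ?_ continuous_const
    have := continuous_subsum x M
    exact ((this.comp (by fun_prop : Continuous fun p : subsumGraph x => p.1.1)).sub
      (by fun_prop)).abs
  have hEu : ⋃ N, E N = Set.univ := by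
    refine Set.eq_univ_of_forall fun ⟨p, hp⟩ => Set.mem_iUnion.2 ?_
    obtain ⟨N, hN⟩ := Metric.tendsto_atTop.1 hp 1 one_pos
    exact ⟨N, fun M hM => (hN M hM).le⟩
  obtain ⟨N, ⟨⟨ε, s⟩, hp⟩, hnhds⟩ := nonempty_interior_of_iUnion_of_closed hEc hEu
  have hpE := interior_subset hnhds
  have hε : Tendsto (subsum x ε) atTop (𝓝 s) := hp
  rw [mem_interior_iff_mem_nhds, mem_nhds_subtype] at hnhds
  obtain ⟨U, hU, hUE⟩ := hnhds
  obtain ⟨V, hV, W, hW, hVW⟩ := mem_nhds_prod_iff.1 hU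
  obtain ⟨L, hL⟩ := exists_prefix_subset_of_mem_nhds hV
  obtain ⟨ρ, hρ, hρW⟩ := Metric.mem_nhds_iff.1 hW
  obtain ⟨b, hbL, hb, hbη, hb0⟩ := exists_oscillating_switch hx hxa hε L (η := 4)
    (τ := min 1 (ρ / 2)) (by norm_num) (by positivity)
  obtain ⟨m, hNm, hm⟩ := frequently_atTop.1 hbη N
  obtain ⟨M, hmM, hM⟩ := frequently_atTop.1 hb0 m
  have hMlow := (hb M).1
  have hτ1 := min_le_left 1 (ρ / 2)
  have hτ2 := min_le_right 1 (ρ / 2)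
  let q : subsumGraph x := ⟨(fun n => xor (ε n) (decide (n < M) && b n),
    s + subsum (switchTerm x ε) b M), tendsto_subsum_truncate hε M⟩
  have hq : q ∈ E N := by
    refine hUE (hVW ⟨hL q.1.1 fun n hn => by simp [q, hbL n hn], hρW ?_⟩)
    rw [Metric.mem_ball, Real.dist_eq, abs_lt]
    constructor <;> linarith
  have h1 := (abs_le.1 (hq m hNm)).2
  have h2 := (abs_le.1 (hpE m hNm)).1
  simp only [q, subsum_xor, subsum_truncate, min_eq_right hmM] at h1 h2
  linarith

/-- Selections together with the convergent sequence of their partial sums, with uniform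
convergence as the topology on the latter. -/
def subsumSeqGraph (x : ℕ → ℝ) : Set ((ℕ → Bool) × C(OnePoint ℕ, ℝ)) :=
  {p | ∀ N : ℕ, p.2 N = subsum x p.1 N}

theorem isClosed_subsumSeqGraph (x : ℕ → ℝ) : IsClosed (subsumSeqGraph x) := by
  simp only [subsumSeqGraph, Set.ofPred_forall]
  exact isClosed_iInter fun N => isClosed_eq (by fun_prop)
    ((continuous_subsum x N).comp continuous_fst)

theorem mem_subsumGraph_of_mem_subsumSeqGraph {x : ℕ → ℝ} {p : (ℕ → Bool) × C(OnePoint ℕ, ℝ)}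
    (hp : p ∈ subsumSeqGraph x) : (p.1, p.2 OnePoint.infty) ∈ subsumGraph x := by
  have h1 : Tendsto (fun N : ℕ => (N : OnePoint ℕ)) atTop (𝓝 OnePoint.infty) := by
    simpa [Nat.cofinite_eq_atTop] using OnePoint.tendsto_coe_infty (X := ℕ)
  exact ((p.2.continuous.tendsto _).comp h1).congr hp

theorem not_iUnion_isClosed_subsumGraph {x : ℕ → ℝ}
    (hx : ∃ s, Tendsto (fun N => ∑ n ∈ Finset.range N, x n) atTop (𝓝 s))
    (hxa : ¬ Summable fun n => |x n|) (F : ℕ → Set ((ℕ → Bool) × ℝ)) (hF : ∀ i, IsClosed (F i)) :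
    subsumGraph x ≠ ⋃ i, F i := by
  intro hU
  have : BaireSpace (subsumSeqGraph x) := by
    have := (isClosed_subsumSeqGraph x).isClosedEmbedding_subtypeVal.IsCompletelyMetrizableSpace
    infer_instance
  have : Nonempty (subsumSeqGraph x) := ⟨⟨(fun _ => false, 0), by simp [subsumSeqGraph, subsum]⟩⟩
  let π : subsumSeqGraph x → (ℕ → Bool) × ℝ := fun p => (p.1.1, p.1.2 OnePoint.infty)
  have hπ : Continuous π := by fun_prop
  have hcov : ⋃ i, π ⁻¹' F i = Set.univ := by
    rw [← Set.preimage_iUnion, ← hU]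
    exact Set.eq_univ_of_forall fun p => mem_subsumGraph_of_mem_subsumSeqGraph p.2
  obtain ⟨i, ⟨⟨ε, u⟩, hp⟩, hnhds⟩ :=
    nonempty_interior_of_iUnion_of_closed (fun i => (hF i).preimage hπ) hcov
  rw [mem_interior_iff_mem_nhds, mem_nhds_subtype] at hnhds
  obtain ⟨U, hU', hUF⟩ := hnhds
  obtain ⟨V, hV, W, hW, hVW⟩ := mem_nhds_prod_iff.1 hU'
  obtain ⟨L, hL⟩ := exists_prefix_subset_of_mem_nhds hV
  obtain ⟨ρ, hρ, hρW⟩ := Metric.mem_nhds_iff.1 hW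
  have hε : Tendsto (subsum x ε) atTop (𝓝 (u OnePoint.infty)) :=
    mem_subsumGraph_of_mem_subsumSeqGraph hp
  obtain ⟨b, hbL, hb, hbη, hb0⟩ := exists_oscillating_switch hx hxa hε L (η := ρ / 4)
    (τ := ρ / 4) (by positivity) (by positivity)
  have habs : ∀ n, |subsum (switchTerm x ε) b n| ≤ ρ / 2 := fun n => by
    have := hb n
    rw [abs_le]; constructor <;> linarith [this.1, this.2]
  -- All truncations of the perturbation stay in the given neighbourhood.
  have hmem : ∀ M, ((fun n => xor (ε n) (decide (n < M) && b n)),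
      u OnePoint.infty + subsum (switchTerm x ε) b M) ∈ F i := fun M => by
    let v := OnePoint.continuousMapMkNat _ _ (tendsto_subsum_truncate (b := b) hε M)
    have hv : ((fun n => xor (ε n) (decide (n < M) && b n)), v) ∈ subsumSeqGraph x := fun N => rfl
    refine hUF (a := ⟨_, hv⟩) (hVW ⟨hL _ fun n hn => by simp [hbL n hn], hρW ?_⟩)
    refine lt_of_le_of_lt ((ContinuousMap.dist_le (by positivity)).2 fun N => ?_) (half_lt_self hρ)
    cases N using OnePoint.rec with
    | infty =>
      change dist (u OnePoint.infty + subsum (switchTerm x ε) b M) _ ≤ _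
      simpa [Real.dist_eq] using habs M
    | coe N =>
      rw [hv N, hp N, subsum_xor, subsum_truncate]
      simpa [Real.dist_eq] using habs (min M N)
  obtain ⟨c, -, φ, hφ, hc⟩ := tendsto_subseq_of_bounded
    (Metric.isBounded_closedBall (x := (0 : ℝ)) (r := ρ / 2))
    (x := subsum (switchTerm x ε) b) (fun n => by simpa using habs n)
  have hlim : ((fun n => xor (ε n) (b n)), u OnePoint.infty + c) ∈ F i := by
    refine (hF i).mem_of_tendsto (b := atTop) (f := fun j => _) (Tendsto.prodMk_nhds ?_
      (hc.const_add _)) (Eventually.of_forall fun j => hmem (φ j))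
    refine tendsto_pi_nhds.2 fun n => tendsto_const_nhds.congr' ?_
    filter_upwards [hφ.tendsto_atTop.eventually_gt_atTop n] with j hj
    simp [hj]
  have hconv : ((fun n => xor (ε n) (b n)), u OnePoint.infty + c) ∈ subsumGraph x := by
    rw [hU]; exact Set.mem_iUnion.2 ⟨i, hlim⟩
  have hT : Tendsto (subsum (switchTerm x ε) b) atTop (𝓝 c) := by
    have h : Tendsto (fun n => _ - _) _ _ := Tendsto.sub hconv hε
    simpa [subsum_xor] using h
  have h1 : ρ / 4 ≤ c := ge_of_tendsto_of_frequently hT hbη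
  have h2 : c ≤ 0 := le_of_tendsto_of_frequently hT hb0
  linarith

/-! ### Transfer to the achievement set -/

/-- The sum of the first coordinates paired with the sum of the absolutely convergent second
coordinates. -/
noncomputable def pairSum (y : ℕ → ℝ) (p : (ℕ → Bool) × ℝ) : ℝ × ℝ :=
  (p.2, ∑' n, if p.1 n then y n else 0)

theorem norm_ite_le_abs (y : ℕ → ℝ) (ε : ℕ → Bool) (n : ℕ) :
    ‖if ε n then y n else 0‖ ≤ |y n| := by
  split_ifs <;> simp

theorem continuous_pairSum {y : ℕ → ℝ} (hy : Summable fun n => |y n|) :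
    Continuous (pairSum y) := by
  refine continuous_snd.prodMk (Continuous.comp (continuous_tsum (fun n => ?_) hy
    fun n ε => norm_ite_le_abs y ε n) continuous_fst)
  exact (continuous_of_discreteTopology (f := fun b : Bool => if b then y n else 0)).comp
    (continuous_apply n)

theorem injective_pairSum {y : ℕ → ℝ}
    (hinj : Function.Injective fun ε : ℕ → Bool => ∑' n, if ε n then y n else 0) :
    Function.Injective (pairSum y) := fun _ _ h =>
  Prod.ext (hinj (congrArg Prod.snd h)) (congrArg Prod.fst h :)

theorem achv_eq_image_pairSum (x : ℕ → ℝ) {y : ℕ → ℝ} (hy : Summable fun n => |y n|) :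
    achv (fun n => ((x n, y n) : ℝ × ℝ)) = pairSum y '' subsumGraph x := by
  have hys : ∀ ε : ℕ → Bool, Tendsto (subsum y ε) atTop (𝓝 (∑' n, if ε n then y n else 0)) :=
    fun ε => (Summable.of_norm_bounded hy (norm_ite_le_abs y ε)).hasSum.tendsto_sum_nat
  have hpair : ∀ (ε : ℕ → Bool) N,
      (∑ n ∈ Finset.range N, if ε n then ((x n, y n) : ℝ × ℝ) else 0) =
        (subsum x ε N, subsum y ε N) := by
    intro ε N
    ext
    · rw [Prod.fst_sum]; exact Finset.sum_congr rfl fun n _ => by split_ifs <;> rfl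
    · rw [Prod.snd_sum]; exact Finset.sum_congr rfl fun n _ => by split_ifs <;> rfl
  ext ⟨s, t⟩
  simp only [achv, Set.mem_ofPred_eq, hpair, Prod.tendsto_iff, Set.mem_image]
  constructor
  · rintro ⟨ε, h1, h2⟩
    exact ⟨(ε, s), h1, Prod.ext rfl (tendsto_nhds_unique (hys ε) h2)⟩
  · rintro ⟨⟨ε, s'⟩, h1, h2⟩
    obtain ⟨rfl, rfl⟩ := Prod.mk.inj h2
    exact ⟨ε, h1, hys ε⟩

/-- If `∑ x_n` is conditionally convergent in `ℝ` and `∑ y_n` is absolutely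
convergent in `ℝ` with `ε ↦ ∑ ε_n y_n` injective on `{0,1}^ℕ`, then the achievement set of
the sequence of pairs `(x_n, y_n)` is a Borel subset of `ℝ²` which is neither `G_δ` nor
`F_σ`. -/
theorem stmt_13 (x y : ℕ → ℝ)
    (hx_conv : ∃ s, Tendsto (fun N => ∑ n ∈ Finset.range N, x n) atTop (𝓝 s))
    (hx_nabs : ¬ Summable fun n => |x n|)
    (hy : Summable fun n => |y n|)
    (hinj : Function.Injective fun ε : ℕ → Bool => ∑' n, if ε n then y n else 0) :
    MeasurableSet (achv fun n => ((x n, y n) : ℝ × ℝ)) ∧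
    ¬ IsGδ (achv fun n => ((x n, y n) : ℝ × ℝ)) ∧
    ¬ ∃ F : ℕ → Set (ℝ × ℝ), (∀ n, IsClosed (F n)) ∧
        achv (fun n => ((x n, y n) : ℝ × ℝ)) = ⋃ n, F n := by
  have hA := achv_eq_image_pairSum x hy
  have hcont := continuous_pairSum hy
  have hpre : pairSum y ⁻¹' achv (fun n => ((x n, y n) : ℝ × ℝ)) = subsumGraph x := by
    rw [hA, Set.preimage_image_eq _ (injective_pairSum hinj)]
  refine ⟨?_, fun hG => ?_, ?_⟩
  · rw [hA]
    exact (measurableSet_subsumGraph x).image_of_measurable_injOn hcont.measurable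
      (injective_pairSum hinj).injOn
  · exact not_isGδ_subsumGraph hx_conv hx_nabs (hpre ▸ hG.preimage hcont)
  · rintro ⟨F, hF, hU⟩
    refine not_iUnion_isClosed_subsumGraph hx_conv hx_nabs (fun i => pairSum y ⁻¹' F i)
      (fun i => (hF i).preimage hcont) ?_
    rw [← hpre, hU, Set.preimage_iUnion]
end

section
/- Let ∑ x_n be a conditionally convergent series in ℝ^k. If the achievement set A(x) is dense in ℝ^k, then the sum range satisfies SR(x) = ℝ^k. -/
open Filter Topology

/-- The sum range of a sequence: all sums of convergent rearrangements. -/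
def sumRange {X : Type*} [AddCommMonoid X] [TopologicalSpace X] (x : ℕ → X) : Set X :=
  {s | ∃ σ : Equiv.Perm ℕ,
    Tendsto (fun N => ∑ n ∈ Finset.range N, x (σ n)) atTop (𝓝 s)}

open Finset in
/-- A vector of the unit cube can be replaced, without changing the corresponding linear
combination of the `v i`, by one with at most `finrank` coordinates different from `0` and `1`. -/
theorem exists_cube_vertex_like {ι V : Type*} [Fintype ι] [NormedAddCommGroup V]
    [NormedSpace ℝ V] [FiniteDimensional ℝ V] (v : ι → V) (t : ι → ℝ)
    (ht : ∀ i, t i ∈ Set.Icc (0 : ℝ) 1) :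
    ∃ t' : ι → ℝ, (∀ i, t' i ∈ Set.Icc (0 : ℝ) 1) ∧ ∑ i, t' i • v i = ∑ i, t i • v i ∧
      #{i | t' i ≠ 0 ∧ t' i ≠ 1} ≤ Module.finrank ℝ V := by
  classical
  set K : Set (ι → ℝ) := Set.pi Set.univ (fun _ => Set.Icc (0 : ℝ) 1) ∩
    {u | ∑ i, u i • v i = ∑ i, t i • v i} with hK
  have hcomp : IsCompact K := by
    refine (isCompact_univ_pi fun _ => isCompact_Icc).inter_right ?_
    exact isClosed_eq (by fun_prop) continuous_const
  obtain ⟨u, hu⟩ := hcomp.extremePoints_nonempty ⟨t, fun i _ => ht i, rfl⟩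
  rw [mem_extremePoints] at hu
  obtain ⟨⟨hu1, hu2⟩, hext⟩ := hu
  replace hu1 : ∀ i, u i ∈ Set.Icc (0 : ℝ) 1 := fun i => hu1 i trivial
  refine ⟨u, hu1, hu2, ?_⟩
  set s : Finset ι := {i | u i ≠ 0 ∧ u i ≠ 1} with hs
  have hind : LinearIndepOn ℝ v (s : Set ι) := by
    rw [linearIndepOn_finset_iff]
    intro f hf i hi
    set h : ι → ℝ := fun i => if i ∈ s then f i else 0 with hh
    have hsum : ∑ i, h i • v i = 0 := by
      simpa [hh, ite_smul, Finset.sum_ite_mem] using hf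
    have hcube : ∀ᶠ r : ℝ in 𝓝 0, ∀ j, u j + r * h j ∈ Set.Icc (0 : ℝ) 1 := by
      rw [eventually_all]
      intro j
      by_cases hj : j ∈ s
      · have hj' : u j ∈ Set.Ioo (0 : ℝ) 1 := by
          have := (mem_filter.1 hj).2
          exact ⟨lt_of_le_of_ne (hu1 j).1 this.1.symm, lt_of_le_of_ne (hu1 j).2 this.2⟩
        have hc : Tendsto (fun r : ℝ => u j + r * h j) (𝓝 0) (𝓝 (u j + 0 * h j)) :=
          Continuous.tendsto (by fun_prop) 0
        rw [zero_mul, add_zero] at hc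
        exact hc.eventually (Icc_mem_nhds hj'.1 hj'.2)
      · exact Eventually.of_forall fun r => by simpa [hh, hj] using hu1 j
    have hcube' : ∀ᶠ r : ℝ in 𝓝 0, ∀ j, u j + (-r) * h j ∈ Set.Icc (0 : ℝ) 1 := by
      have : Tendsto (fun r : ℝ => -r) (𝓝 0) (𝓝 0) := by
        simpa using (continuous_neg (G := ℝ)).tendsto 0
      exact this.eventually hcube
    obtain ⟨r, ⟨hr1, hr2⟩, hr0⟩ := (((hcube.and hcube').filter_mono
      (nhdsWithin_le_nhds (s := Set.Ioi 0))).and self_mem_nhdsWithin).exists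
    have hmem : ∀ c : ℝ, (∀ j, u j + c * h j ∈ Set.Icc (0 : ℝ) 1) →
        (fun j => u j + c * h j) ∈ K := by
      intro c hc
      refine ⟨fun j _ => hc j, ?_⟩
      simp only [Set.mem_ofPred_eq, add_smul, sum_add_distrib, mul_smul, ← smul_sum, hsum,
        smul_zero, add_zero]
      exact hu2
    have := hext _ (hmem r hr1) _ (hmem (-r) hr2)
      ⟨1 / 2, 1 / 2, by norm_num, by norm_num, by norm_num, by ext j; simp; ring⟩
    have h0 : r * h i = 0 := by simpa using congrFun this.1 i
    have : h i = 0 := (mul_eq_zero.1 h0).resolve_left (ne_of_gt hr0)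
    simpa [hh, hi] using this
  have := LinearIndependent.fintype_card_le_finrank hind
  simpa using this

open Finset in
/-- The version of `exists_cube_vertex_like` for sums over a finset. -/
theorem exists_cube_vertex_like_finset {ι V : Type*} [NormedAddCommGroup V]
    [NormedSpace ℝ V] [FiniteDimensional ℝ V] (S : Finset ι) (v : ι → V) (t : ι → ℝ)
    (ht : ∀ i ∈ S, t i ∈ Set.Icc (0 : ℝ) 1) :
    ∃ t' : ι → ℝ, (∀ i ∈ S, t' i ∈ Set.Icc (0 : ℝ) 1) ∧
      ∑ i ∈ S, t' i • v i = ∑ i ∈ S, t i • v i ∧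
      #{i ∈ S | t' i ≠ 0 ∧ t' i ≠ 1} ≤ Module.finrank ℝ V := by
  classical
  obtain ⟨u, hu1, hu2, hu3⟩ :=
    exists_cube_vertex_like (fun i : S => v i) (fun i : S => t i) (fun i => ht i i.2)
  let u' : ι → ℝ := fun i => if h : i ∈ S then u ⟨i, h⟩ else 0
  have hu' : ∀ i : S, u' i = u i := fun i => by simp [u']
  refine ⟨u', fun i hi => by simpa [u', hi] using hu1 ⟨i, hi⟩, ?_, ?_⟩
  · rw [← sum_coe_sort S, ← sum_coe_sort S (fun i => t i • v i)]
    simpa only [hu'] using hu2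
  · refine le_trans (le_of_eq ?_) hu3
    rw [← card_map (Function.Embedding.subtype (· ∈ S))]
    congr 1
    ext i
    by_cases h : i ∈ S <;> simp [u', h]

open Finset in
/-- Rounding: a combination with coefficients in `[0, 1]` of vectors of norm at most `δ` is
within `finrank * δ` of a subsum. -/
theorem exists_subsum_near {ι E : Type*} [NormedAddCommGroup E]
    [NormedSpace ℝ E] [FiniteDimensional ℝ E] (S : Finset ι) (v : ι → E) (t : ι → ℝ)
    (ht : ∀ i ∈ S, t i ∈ Set.Icc (0 : ℝ) 1) {δ : ℝ} (hδ : 0 ≤ δ) (hv : ∀ i ∈ S, ‖v i‖ ≤ δ) :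
    ∃ G ⊆ S, ‖∑ i ∈ G, v i - ∑ i ∈ S, t i • v i‖ ≤ Module.finrank ℝ E * δ := by
  classical
  obtain ⟨u, hu1, hu2, hu3⟩ := exists_cube_vertex_like_finset S v t ht
  refine ⟨{i ∈ S | u i = 1}, filter_subset _ _, ?_⟩
  rw [← hu2, sum_filter, ← sum_sub_distrib]
  calc ‖∑ i ∈ S, ((if u i = 1 then v i else 0) - u i • v i)‖
      ≤ ∑ i ∈ S, ‖(if u i = 1 then v i else 0) - u i • v i‖ := norm_sum_le _ _
    _ ≤ ∑ i ∈ S, if u i ≠ 0 ∧ u i ≠ 1 then δ else 0 := by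
        refine sum_le_sum fun i hi => ?_
        by_cases h1 : u i = 1
        · simp [h1]
        by_cases h0 : u i = 0
        · simp [h0]
        have := hu1 i hi
        simp only [h1, h0, if_false, zero_sub, norm_neg, norm_smul, Real.norm_eq_abs,
          abs_of_nonneg this.1, ne_eq, not_false_eq_true, and_self, if_true]
        exact (mul_le_of_le_one_left (norm_nonneg _) this.2).trans (hv i hi)
    _ = #{i ∈ S | u i ≠ 0 ∧ u i ≠ 1} * δ := by rw [← sum_filter]; simp
    _ ≤ _ := by gcongr

open Finset in
/-- The peeling step in the Steinitz lemma. -/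
theorem exists_erase_weights {ι E : Type*} [DecidableEq ι] [NormedAddCommGroup E]
    [NormedSpace ℝ E] [FiniteDimensional ℝ E] (S : Finset ι) (v : ι → E) (t : ι → ℝ)
    (ht : ∀ i ∈ S, t i ∈ Set.Icc (0 : ℝ) 1) (ht0 : ∑ i ∈ S, t i • v i = 0)
    (hcard : Module.finrank ℝ E + 1 ≤ #S) (hsum : ∑ i ∈ S, t i = #S - Module.finrank ℝ E) :
    ∃ i ∈ S, ∃ u : ι → ℝ, (∀ j ∈ S.erase i, u j ∈ Set.Icc (0 : ℝ) 1) ∧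
      ∑ j ∈ S.erase i, u j • v j = 0 ∧
      ∑ j ∈ S.erase i, u j = #(S.erase i) - Module.finrank ℝ E := by
  set d := Module.finrank ℝ E
  have hcard' : (d : ℝ) + 1 ≤ #S := by exact_mod_cast hcard
  set c : ℝ := (#S - 1 - d) / (#S - d) with hc
  have hpos : (0 : ℝ) < #S - d := by linarith
  have hc0 : 0 ≤ c := div_nonneg (by linarith) hpos.le
  have hc1 : c ≤ 1 := (div_le_one hpos).2 (by linarith)
  obtain ⟨u, hu1, hu2, hu3⟩ := exists_cube_vertex_like_finset S (fun i => (v i, (1 : ℝ)))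
    (fun i => c * t i) fun i hi =>
      ⟨mul_nonneg hc0 (ht i hi).1, mul_le_one₀ hc1 (ht i hi).1 (ht i hi).2⟩
  have hv : ∑ i ∈ S, u i • v i = 0 := by
    have := congrArg Prod.fst hu2
    simpa [Prod.fst_sum, mul_smul, ← smul_sum, ht0] using this
  have hu : ∑ i ∈ S, u i = #S - 1 - d := by
    have := congrArg Prod.snd hu2
    simp only [Prod.smul_mk, smul_eq_mul, mul_one, Prod.snd_sum, ← mul_sum, hsum] at this
    rw [this, hc, div_mul_cancel₀ _ hpos.ne']
  rw [Module.finrank_prod, Module.finrank_self] at hu3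
  obtain ⟨i, hi, hi0⟩ : ∃ i ∈ S, u i = 0 := by
    by_contra! hne
    have hlt : (#S : ℝ) - #{i ∈ S | u i ≠ 0 ∧ u i ≠ 1} < ∑ i ∈ S, u i := by
      by_cases hex : ∃ i ∈ S, u i ≠ 1
      · obtain ⟨i, hi, h1⟩ := hex
        have : (#S : ℝ) - #{i ∈ S | u i ≠ 0 ∧ u i ≠ 1} =
            ∑ i ∈ S, (1 - if u i ≠ 0 ∧ u i ≠ 1 then (1 : ℝ) else 0) := by
          rw [sum_sub_distrib, ← sum_filter]; simp
        rw [this]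
        refine sum_lt_sum (fun i hi => ?_) ⟨i, hi, ?_⟩
        · by_cases h1 : u i = 1
          · simp [h1]
          · simpa [h1, hne i hi] using (hu1 i hi).1
        · simpa [h1, hne i hi] using lt_of_le_of_ne (hu1 i hi).1 (hne i hi).symm
      · push Not at hex
        have : ∑ i ∈ S, u i = #S := by rw [sum_congr rfl hex]; simp
        have hd : (0 : ℝ) ≤ d := d.cast_nonneg
        linarith
    have : (#{i ∈ S | u i ≠ 0 ∧ u i ≠ 1} : ℝ) ≤ d + 1 := by exact_mod_cast hu3
    linarith
  refine ⟨i, hi, u, fun j hj => hu1 j (mem_of_mem_erase hj), ?_, ?_⟩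
  · rw [← hv, ← add_sum_erase S _ hi, hi0, zero_smul, zero_add]
  · have := add_sum_erase S u hi
    rw [card_erase_of_mem hi, Nat.cast_sub (by omega), Nat.cast_one]
    linarith

open Finset in
/-- The Steinitz lemma, in the form in which it is proved by induction on the number of vectors. -/
theorem exists_list_of_weights {ι E : Type*} [DecidableEq ι] [NormedAddCommGroup E]
    [NormedSpace ℝ E] [FiniteDimensional ℝ E] (v : ι → E) {δ : ℝ} (hδ : 0 ≤ δ) (n : ℕ) :
    ∀ S : Finset ι, #S = n → (∀ i ∈ S, ‖v i‖ ≤ δ) →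
      (Module.finrank ℝ E ≤ #S → ∃ t : ι → ℝ, (∀ i ∈ S, t i ∈ Set.Icc (0 : ℝ) 1) ∧
        ∑ i ∈ S, t i • v i = 0 ∧ ∑ i ∈ S, t i = #S - Module.finrank ℝ E) →
      ∃ l : List ι, l.Nodup ∧ l.toFinset = S ∧
        ∀ p, p <+: l → ‖(p.map v).sum‖ ≤ Module.finrank ℝ E * δ := by
  induction n with
  | zero =>
    intro S hS _ _
    refine ⟨[], List.nodup_nil, by simpa using (card_eq_zero.1 hS).symm, ?_⟩
    intro p hp
    rw [List.prefix_nil.1 hp]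
    simp only [List.map_nil, List.sum_nil, norm_zero]
    positivity
  | succ n ih =>
    intro S hS hv hw
    have hsum : ‖∑ i ∈ S, v i‖ ≤ Module.finrank ℝ E * δ := by
      rcases le_total (Module.finrank ℝ E) #S with hle | hle
      · obtain ⟨t, ht, ht0, hts⟩ := hw hle
        have : ∑ i ∈ S, v i = ∑ i ∈ S, (1 - t i) • v i := by
          simp only [sub_smul, sum_sub_distrib, ht0, one_smul, sub_zero]
        rw [this]
        calc ‖∑ i ∈ S, (1 - t i) • v i‖ ≤ ∑ i ∈ S, ‖(1 - t i) • v i‖ := norm_sum_le _ _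
          _ ≤ ∑ i ∈ S, (1 - t i) * δ := by
            refine sum_le_sum fun i hi => ?_
            have h1 : 0 ≤ 1 - t i := sub_nonneg.2 (ht i hi).2
            rw [norm_smul, Real.norm_of_nonneg h1]
            exact mul_le_mul_of_nonneg_left (hv i hi) h1
          _ = Module.finrank ℝ E * δ := by
            rw [← sum_mul, sum_sub_distrib, hts]; simp
      · calc ‖∑ i ∈ S, v i‖ ≤ #S • δ := norm_sum_le_of_le S hv |>.trans (by simp)
          _ ≤ Module.finrank ℝ E * δ := by rw [nsmul_eq_mul]; gcongr
    obtain ⟨i, hi, hw'⟩ : ∃ i ∈ S, Module.finrank ℝ E ≤ #(S.erase i) →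
        ∃ t : ι → ℝ, (∀ j ∈ S.erase i, t j ∈ Set.Icc (0 : ℝ) 1) ∧
        ∑ j ∈ S.erase i, t j • v j = 0 ∧
        ∑ j ∈ S.erase i, t j = #(S.erase i) - Module.finrank ℝ E := by
      by_cases hle : Module.finrank ℝ E + 1 ≤ #S
      · obtain ⟨t, ht, ht0, hts⟩ := hw (by omega)
        obtain ⟨i, hi, h⟩ := exists_erase_weights S v t ht ht0 hle hts
        exact ⟨i, hi, fun _ => h⟩
      · obtain ⟨i, hi⟩ := card_pos.1 (by omega : 0 < #S)
        refine ⟨i, hi, fun h => ?_⟩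
        rw [card_erase_of_mem hi] at h
        omega
    obtain ⟨l, hl1, hl2, hl3⟩ := ih (S.erase i) (by rw [card_erase_of_mem hi]; omega)
      (fun j hj => hv j (mem_of_mem_erase hj)) hw'
    have hil : i ∉ l := by rw [← List.mem_toFinset, hl2]; simp
    have hnd : (l ++ [i]).Nodup := by
      rw [← List.concat_eq_append]; exact hl1.concat hil
    have hto : (l ++ [i]).toFinset = S := by
      rw [List.toFinset_append, hl2]
      ext j
      by_cases hj : j = i <;> simp [hj, hi]
    refine ⟨l ++ [i], hnd, hto, fun p hp => ?_⟩
    rcases List.prefix_concat_iff.1 (by simpa using hp) with rfl | hp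
    · rw [← List.sum_toFinset _ hnd, hto]
      exact hsum
    · exact hl3 p hp

open Finset in
/-- **The Steinitz lemma**: finitely many vectors of norm at most `δ` whose sum has norm at most `β`
can be listed in such a way that all partial sums are bounded by `(finrank + 1) * (δ + β)`. -/
theorem exists_list_prefix_sum_le {ι E : Type*} [DecidableEq ι] [NormedAddCommGroup E]
    [NormedSpace ℝ E] [FiniteDimensional ℝ E] (S : Finset ι) (v : ι → E) {δ β : ℝ}
    (hδ : 0 ≤ δ) (hβ : 0 ≤ β) (hv : ∀ i ∈ S, ‖v i‖ ≤ δ) (hS : ‖∑ i ∈ S, v i‖ ≤ β) :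
    ∃ l : List ι, l.Nodup ∧ l.toFinset = S ∧
      ∀ p, p <+: l → ‖(p.map v).sum‖ ≤ (Module.finrank ℝ E + 1) * (δ + β) := by
  rcases S.eq_empty_or_nonempty with rfl | hne
  · refine ⟨[], List.nodup_nil, rfl, fun p hp => ?_⟩
    rw [List.prefix_nil.1 hp]
    simp only [List.map_nil, List.sum_nil, norm_zero]
    positivity
  have hm : (0 : ℝ) < #S := by exact_mod_cast hne.card_pos
  set b : E := (#S : ℝ)⁻¹ • ∑ i ∈ S, v i with hb
  have hbm : (#S : ℝ) * ‖b‖ ≤ β := by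
    rw [hb, norm_smul, Real.norm_of_nonneg (by positivity), mul_inv_cancel_left₀ hm.ne']
    exact hS
  have hbβ : ‖b‖ ≤ β :=
    (le_mul_of_one_le_left (norm_nonneg b) (by exact_mod_cast hne.card_pos)).trans hbm
  have hzero : ∑ i ∈ S, (v i - b) = 0 := by
    rw [sum_sub_distrib, sum_const, hb, ← Nat.cast_smul_eq_nsmul ℝ, smul_inv_smul₀ hm.ne', sub_self]
  obtain ⟨l, hl1, hl2, hl3⟩ := exists_list_of_weights (fun i => v i - b) (add_nonneg hδ hβ) #S S rfl
    (fun i hi => (norm_sub_le _ _).trans (add_le_add (hv i hi) hbβ)) (fun hle => by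
      have hle' : (Module.finrank ℝ E : ℝ) ≤ #S := by exact_mod_cast hle
      refine ⟨fun _ => (#S - Module.finrank ℝ E) / #S, fun i _ => ⟨?_, ?_⟩, ?_, ?_⟩
      · exact div_nonneg (by linarith) hm.le
      · rw [div_le_one hm]
        have : (0 : ℝ) ≤ Module.finrank ℝ E := Nat.cast_nonneg _
        linarith
      · rw [← smul_sum, hzero, smul_zero]
      · rw [sum_const, nsmul_eq_mul, mul_div_cancel₀ _ hm.ne'])
  refine ⟨l, hl1, hl2, fun p hp => ?_⟩
  have hlen : (p.length : ℝ) ≤ #S := by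
    rw [← hl2, List.toFinset_card_of_nodup hl1]
    exact_mod_cast hp.length_le
  have hsub : (p.map v).sum = (p.map fun i => v i - b).sum + p.length • b := by
    clear hp hlen
    induction p with
    | nil => simp
    | cons a p ih => simp only [List.map_cons, List.sum_cons, ih, List.length_cons, succ_nsmul]; abel
  rw [hsub]
  calc _ ≤ Module.finrank ℝ E * (δ + β) + #S * ‖b‖ := by
        refine (norm_add_le _ _).trans (add_le_add (hl3 p hp) ?_)
        rw [← Nat.cast_smul_eq_nsmul ℝ, norm_smul, Real.norm_of_nonneg (by positivity)]
        gcongr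
    _ ≤ _ := by linarith

open Finset in
/-- If the achievement set of `x` is dense, then the finite subsums avoiding a given finite set of
indices form a net in the space, as fine as the remaining terms are small. -/
theorem exists_finset_sum_near {E : Type*} [NormedAddCommGroup E] [NormedSpace ℝ E]
    [FiniteDimensional ℝ E] {x : ℕ → E} (hd : Dense (achv x)) (A : Finset ℕ) {δ : ℝ} (hδ : 0 < δ)
    (hA : ∀ n ∉ A, ‖x n‖ ≤ δ) (y : E) :
    ∃ G : Finset ℕ, Disjoint A G ∧ ‖∑ n ∈ G, x n - y‖ ≤ (Module.finrank ℝ E + 1) * δ := by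
  classical
  set T : Set (ℕ →₀ ℝ) := {t | ∀ n, t n ∈ Set.Icc (0 : ℝ) 1 ∧ (n ∈ A → t n = 0)} with hT
  have hTconv : Convex ℝ T := by
    intro t ht u hu a b ha hb hab n
    refine ⟨?_, fun hn => by simp [(ht n).2 hn, (hu n).2 hn]⟩
    exact convex_Icc (0 : ℝ) 1 (ht n).1 (hu n).1 ha hb hab
  set K : Set E := Finsupp.linearCombination ℝ x '' T with hK
  have hKconv : Convex ℝ K := hTconv.linear_image _
  have hfin : ∀ G : Finset ℕ, Disjoint A G → ∑ n ∈ G, x n ∈ K := by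
    intro G hG
    refine ⟨Finsupp.indicator G fun _ _ => 1, fun n => ?_, ?_⟩
    · rw [Finsupp.indicator_apply]
      split_ifs with h
      · exact ⟨by simp, fun hn => absurd h (disjoint_left.1 hG hn)⟩
      · simp
    · rw [Finsupp.linearCombination_apply, Finsupp.sum_of_support_subset (s := G) _
        (Finsupp.support_indicator_subset G _) _ (by simp)]
      exact sum_congr rfl fun n hn => by simp [Finsupp.indicator_apply, hn]
  have hy : y ∈ closure K := by
    by_contra hy
    obtain ⟨f, u, hf, hfy⟩ := geometric_hahn_banach_closed_point hKconv.closure isClosed_closure hy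
    have hu : 0 < u := by simpa using hf 0 (subset_closure (by simpa using hfin ∅ (by simp)))
    set M : ℝ := ∑ n ∈ A, |f (x n)| + u with hM
    have hM0 : 0 < M := add_pos_of_nonneg_of_pos (sum_nonneg fun _ _ => abs_nonneg _) hu
    have hpart : ∀ G : Finset ℕ, f (∑ n ∈ G, x n) ≤ M := by
      intro G
      rw [← sum_inter_add_sum_sdiff G A, map_add, map_sum]
      refine add_le_add ?_ (hf _ (subset_closure (hfin _ disjoint_sdiff))).le
      calc ∑ n ∈ G ∩ A, f (x n) ≤ ∑ n ∈ G ∩ A, |f (x n)| := sum_le_sum fun _ _ => le_abs_self _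
        _ ≤ _ := sum_le_sum_of_subset_of_nonneg inter_subset_right fun _ _ _ => abs_nonneg _
    have hach : ∀ z ∈ achv x, f z ≤ M := by
      rintro z ⟨ε, hε⟩
      refine le_of_tendsto ((f.continuous.tendsto z).comp hε) (Eventually.of_forall fun N => ?_)
      simpa [← sum_filter] using hpart {n ∈ range N | ε n = true}
    have hfy0 : 0 < f y := hu.trans hfy
    have hopen : IsOpen {z | M < f z} := isOpen_lt continuous_const f.continuous
    obtain ⟨z, hz, hzA⟩ := hd.inter_open_nonempty _ hopen ⟨(2 * M / f y) • y, by
      simp only [Set.mem_ofPred_eq, map_smul, smul_eq_mul, div_mul_cancel₀ _ hfy0.ne']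
      linarith⟩
    exact absurd (hach z hzA) (not_le.2 hz)
  obtain ⟨_, ⟨t, ht, rfl⟩, hty⟩ := Metric.mem_closure_iff.1 hy δ hδ
  have hsupp : ∀ n ∈ t.support, n ∉ A := fun n hn hnA =>
    Finsupp.mem_support_iff.1 hn ((ht n).2 hnA)
  obtain ⟨G, hG, hGn⟩ := exists_subsum_near t.support x t (fun n _ => (ht n).1) hδ.le
    fun n hn => hA n (hsupp n hn)
  refine ⟨G, disjoint_right.2 fun n hn => hsupp n (hG hn), ?_⟩
  rw [dist_eq_norm, norm_sub_rev, Finsupp.linearCombination_apply, Finsupp.sum] at hty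
  calc _ ≤ _ := norm_sub_le_norm_sub_add_norm_sub _ (∑ n ∈ t.support, t n • x n) _
    _ ≤ Module.finrank ℝ E * δ + δ := add_le_add hGn hty.le
    _ = _ := by ring

/-- Concatenating finite blocks: if lists of indices can be extended step by step, exhausting `ℕ`,
so that the sums over all intermediate lists are controlled by a null sequence `e`,
then `x` has a rearrangement with sum `s`. -/
theorem mem_sumRange_of_extend {E : Type*} [SeminormedAddCommGroup E] {x : ℕ → E} {s : E}
    {e : ℕ → ℝ} (he : Tendsto e atTop (𝓝 0)) (P : ℕ → List ℕ → Prop)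
    (hnodup : ∀ J L, P J L → L.Nodup) (hmem : ∀ J L, P J L → ∀ n < J, n ∈ L)
    (hstart : ∃ L, P 0 L)
    (hstep : ∀ J L, P J L → ∃ l, P (J + 1) (L ++ l) ∧
      ∀ p, p <+: l → ‖((L ++ p).map x).sum - s‖ ≤ e J) :
    s ∈ sumRange x := by
  obtain ⟨L₀, hL₀⟩ := hstart
  choose l hl1 hl2 using hstep
  let F : ∀ J, {L // P J L} := fun J =>
    Nat.rec ⟨L₀, hL₀⟩ (fun J L => ⟨L.1 ++ l J L.1 L.2, hl1 J L.1 L.2⟩) J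
  let L : ℕ → List ℕ := fun J => (F J).1
  have hLP : ∀ J, P J (L J) := fun J => (F J).2
  have hLsucc : ∀ J, L (J + 1) = L J ++ l J (L J) (hLP J) := fun J => rfl
  have hpre : ∀ {I J}, I ≤ J → L I <+: L J := by
    intro I J hIJ
    induction hIJ with
    | refl => exact List.prefix_rfl
    | step _ ih => exact ih.trans (hLsucc _ ▸ List.prefix_append _ _)
  have hnd : ∀ J, (L J).Nodup := fun J => hnodup J _ (hLP J)
  have hlen : ∀ J, J ≤ (L J).length := by
    intro J
    have hsub : Finset.range J ⊆ (L J).toFinset := fun n hn =>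
      List.mem_toFinset.2 (hmem J _ (hLP J) n (Finset.mem_range.1 hn))
    simpa [List.toFinset_card_of_nodup (hnd J)] using Finset.card_le_card hsub
  let f : ℕ → ℕ := fun n => (L (n + 1))[n]'(hlen (n + 1))
  have hf : ∀ J n (h : n < (L J).length), f n = (L J)[n] := by
    intro J n h
    rcases le_total (n + 1) J with hle | hle
    · exact (hpre hle).getElem _
    · exact ((hpre hle).getElem _).symm
  have hinj : Function.Injective f := by
    intro m n hmn
    have hm : m < (L (m + n + 1)).length := lt_of_lt_of_le (by omega) (hlen _)
    have hn : n < (L (m + n + 1)).length := lt_of_lt_of_le (by omega) (hlen _)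
    rw [hf _ m hm, hf _ n hn] at hmn
    exact (hnd _).getElem_inj_iff.1 hmn
  have hsurj : Function.Surjective f := by
    intro n
    obtain ⟨i, hi, hin⟩ := List.getElem_of_mem (hmem (n + 1) _ (hLP (n + 1)) n n.lt_succ_self)
    exact ⟨i, (hf _ i hi).trans hin⟩
  have hsum : ∀ J N, N ≤ (L J).length →
      ∑ n ∈ Finset.range N, x (f n) = (((L J).take N).map x).sum := by
    intro J N
    induction N with
    | zero => simp
    | succ N ih =>
      intro hN
      rw [Finset.sum_range_succ, ih (by omega), hf J N (by omega),
        List.take_succ_eq_append_getElem hN, List.map_append, List.sum_append]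
      simp only [List.map_cons, List.map_nil, List.sum_singleton]
  have hbij : Function.Bijective f := ⟨hinj, hsurj⟩
  refine ⟨Equiv.ofBijective f hbij, ?_⟩
  simp only [Equiv.ofBijective_apply]
  rw [Metric.tendsto_atTop]
  intro ε hε
  obtain ⟨J₀, hJ₀⟩ := (he.eventually (gt_mem_nhds hε)).exists_forall_of_atTop
  refine ⟨(L J₀).length, fun N hN => ?_⟩
  obtain ⟨J, hJ, hJN, hNJ⟩ : ∃ J, J₀ ≤ J ∧ (L J).length ≤ N ∧ N ≤ (L (J + 1)).length := by
    by_contra! hcon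
    have : ∀ J, J₀ ≤ J → (L J).length ≤ N := by
      intro J hJ
      induction J, hJ using Nat.le_induction with
      | base => exact hN
      | succ J hJ ih => exact (hcon J hJ ih).le
    have h1 := this (J₀ + N + 1) (by omega)
    have h2 := hlen (J₀ + N + 1)
    omega
  rw [dist_eq_norm, hsum (J + 1) N hNJ, hLsucc, List.take_append, List.take_of_length_le hJN]
  exact (hl2 J _ (hLP J) _ (List.take_prefix _ _)).trans_lt (hJ₀ J hJ)

open Finset in
/-- If the terms of `x` tend to zero and the achievement set of `x` is dense, then every vector is
the sum of a rearrangement of `x`. -/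
theorem sumRange_eq_univ_of_dense_achv {E : Type*} [NormedAddCommGroup E] [NormedSpace ℝ E]
    [FiniteDimensional ℝ E] {x : ℕ → E} (hx : Tendsto x atTop (𝓝 0)) (hd : Dense (achv x)) :
    sumRange x = Set.univ := by
  classical
  refine Set.eq_univ_of_forall fun s => ?_
  set d : ℝ := Module.finrank ℝ E + 1 with hdd
  have hd0 : 0 < d := by positivity
  set δ : ℕ → ℝ := fun J => 1 / ((J : ℝ) + 1) with hδ
  have hδ0 : ∀ J, 0 < δ J := fun J => by positivity
  have hδanti : ∀ J, δ (J + 1) ≤ δ J := fun J =>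
    one_div_le_one_div_of_le (by positivity) (by push_cast; linarith)
  have hbig : ∀ J, ∃ B : Finset ℕ, ∀ n ∉ B, J ≤ n ∧ ‖x n‖ ≤ δ J := by
    intro J
    obtain ⟨N, hN⟩ := (hx.norm.eventually
      (gt_mem_nhds (norm_zero (E := E) ▸ hδ0 J))).exists_forall_of_atTop
    refine ⟨range (max N J), fun n hn => ?_⟩
    rw [mem_range, not_lt, max_le_iff] at hn
    exact ⟨hn.2, (hN n hn.1).le⟩
  let P : ℕ → List ℕ → Prop := fun J L => L.Nodup ∧ (∀ n ∉ L, J ≤ n ∧ ‖x n‖ ≤ δ J) ∧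
    ‖(L.map x).sum - s‖ ≤ d * δ J
  -- Any finite set of indices extends to one satisfying the requirements on `P J`.
  have hext : ∀ J (A : Finset ℕ), ∃ A', A ⊆ A' ∧ (∀ n ∉ A', J ≤ n ∧ ‖x n‖ ≤ δ J) ∧
      ‖∑ n ∈ A', x n - s‖ ≤ d * δ J := by
    intro J A
    obtain ⟨B, hB⟩ := hbig J
    obtain ⟨G, hG, hGs⟩ := exists_finset_sum_near hd (A ∪ B) (hδ0 J)
      (fun n hn => (hB n fun h => hn (mem_union_right _ h)).2) (s - ∑ n ∈ A ∪ B, x n)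
    refine ⟨A ∪ B ∪ G, by grind, fun n hn => hB n (by grind), ?_⟩
    rw [sum_union hG]
    convert hGs using 2
    abel
  refine mem_sumRange_of_extend (e := fun J => (d * (1 + 2 * d) + d) * δ J) ?_ P
    (fun J L h => h.1) (fun J L h n hn => ?_) ?_ ?_
  · simpa [hδ] using
      (tendsto_one_div_add_atTop_nhds_zero_nat (𝕜 := ℝ)).const_mul (d * (1 + 2 * d) + d)
  · by_contra hnL
    exact absurd (h.2.1 n hnL).1 (not_le.2 hn)
  · obtain ⟨A, -, hA, hAs⟩ := hext 0 ∅
    exact ⟨A.toList, A.nodup_toList, by simpa using hA, by simpa [sum_map_toList] using hAs⟩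
  · rintro J L ⟨hL, hLx, hLs⟩
    obtain ⟨A, hLA, hA, hAs⟩ := hext (J + 1) L.toFinset
    have hsplit : ∑ n ∈ A \ L.toFinset, x n = (∑ n ∈ A, x n - s) - ((L.map x).sum - s) := by
      rw [← List.sum_toFinset _ hL, ← sum_sdiff hLA]
      abel
    obtain ⟨l, hl, hlA, hlp⟩ := exists_list_prefix_sum_le (A \ L.toFinset) x (hδ0 J).le
      (β := 2 * d * δ J) (by have := hδ0 J; positivity)
      (fun n hn => (hLx n (by simpa using (mem_sdiff.1 hn).2)).2) (by
        rw [hsplit]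
        have := mul_le_mul_of_nonneg_left (hδanti J) hd0.le
        exact (norm_sub_le _ _).trans (by linarith))
    have hnd : (L ++ l).Nodup := hL.append hl fun n hnL hnl => by
      have : n ∈ A \ L.toFinset := hlA ▸ List.mem_toFinset.2 hnl
      simp [hnL] at this
    have hto : (L ++ l).toFinset = A := by
      rw [List.toFinset_append, hlA, union_sdiff_of_subset hLA]
    refine ⟨l, ⟨hnd, fun n hn => hA n ?_, ?_⟩, fun p hp => ?_⟩
    · rwa [← hto, List.mem_toFinset]
    · rwa [← List.sum_toFinset _ hnd, hto]
    · rw [List.map_append, List.sum_append, add_sub_right_comm]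
      refine (norm_add_le _ _).trans ((add_le_add hLs (hlp p hp)).trans (le_of_eq ?_))
      rw [← hdd]
      ring

/-- If `∑ x_n` is conditionally convergent in `ℝ^k` and `A(x)` is dense in
`ℝ^k`, then `SR(x) = ℝ^k`. -/
theorem stmt_14 (k : ℕ) (x : ℕ → EuclideanSpace ℝ (Fin k))
    (hconv : ∃ s, Tendsto (fun N => ∑ n ∈ Finset.range N, x n) atTop (𝓝 s))
    (hnabs : ¬ Summable fun n => ‖x n‖)
    (hd : Dense (achv x)) :
    sumRange x = Set.univ := by
  obtain ⟨s, hs⟩ := hconv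
  refine sumRange_eq_univ_of_dense_achv ?_ hd
  have := ((tendsto_add_atTop_iff_nat 1).2 hs).sub hs
  simpa [Finset.sum_range_succ] using this
end

section
/- Let (x_k)_{k≥1} be a sequence of positive reals with ∑_{k=1}^∞ x_k = X < ∞ satisfying: (i) A(x) + A(x) = [0, 2X] (the set of all sums a + b with a, b ∈ A(x) equals the interval [0,2X]); (ii) for every a ∈ (0, 2X) there exists a nondegenerate interval I_a ⊆ A(x) such that for every t ∈ I_a there exists z ∈ A(x) with t + z = a. Let ∑_{k=1}^∞ y_k be a conditionally convergent series of reals with sum Y. Define the interleaved sequence of pairs in ℝ² by x̄_{2k−1} = x̄_{2k} = x_k, ȳ_{2k−1} = y_k, ȳ_{2k} = 0 for every k ≥ 1. Then A((x̄_n, ȳ_n)_n) = ((0, 2X) × ℝ) ∪ {(0,0), (2X, Y)}. -/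
open Filter Topology Pointwise

/-- Partial sums of the interleaving of two sequences. -/
lemma sum_range_interleave {M : Type*} [AddCommMonoid M] (u v : ℕ → M) (N : ℕ) :
    ∑ n ∈ Finset.range N, (if n % 2 = 0 then u (n / 2) else v (n / 2)) =
      ∑ k ∈ Finset.range ((N + 1) / 2), u k + ∑ k ∈ Finset.range (N / 2), v k := by
  induction N with
  | zero => simp
  | succ N ih =>
    rw [Finset.sum_range_succ, ih]
    rcases Nat.mod_two_eq_zero_or_one N with h | h
    · have h1 : (N + 1) / 2 = N / 2 := by omega
      have h2 : (N + 1 + 1) / 2 = N / 2 + 1 := by omega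
      rw [h1, h2, Finset.sum_range_succ, if_pos h]
      abel
    · have h1 : (N + 1) / 2 = N / 2 + 1 := by omega
      have h2 : (N + 1 + 1) / 2 = N / 2 + 1 := by omega
      rw [h1, h2, Finset.sum_range_succ v, if_neg (by omega)]
      abel

/-- The interleaving of two convergent series converges to the sum of their values. -/
lemma tendsto_sum_range_interleave {M : Type*} [AddCommMonoid M] [TopologicalSpace M]
    [ContinuousAdd M] {u v : ℕ → M} {a b : M}
    (hu : Tendsto (fun N => ∑ k ∈ Finset.range N, u k) atTop (𝓝 a))
    (hv : Tendsto (fun N => ∑ k ∈ Finset.range N, v k) atTop (𝓝 b)) :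
    Tendsto (fun N => ∑ n ∈ Finset.range N, (if n % 2 = 0 then u (n / 2) else v (n / 2)))
      atTop (𝓝 (a + b)) := by
  simp only [sum_range_interleave]
  have h : Tendsto (fun N : ℕ => N / 2) atTop atTop :=
    Nat.tendsto_div_const_atTop (by norm_num)
  exact (hu.comp (h.comp (tendsto_add_atTop_nat 1))).add (hv.comp h)

/-- The positive parts of a conditionally convergent real series diverge. -/
lemma not_summable_max_zero_s16 {y : ℕ → ℝ} {Y : ℝ}
    (hY : Tendsto (fun N => ∑ k ∈ Finset.range N, y k) atTop (𝓝 Y))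
    (hynabs : ¬ Summable fun k => |y k|) : ¬ Summable fun k => max (y k) 0 := by
  intro h
  apply hynabs
  have habs : ∀ k, |y k| = 2 * max (y k) 0 - y k := fun k => by
    rcases le_total (y k) 0 with hk | hk
    · rw [abs_of_nonpos hk, max_eq_right hk]; ring
    · rw [abs_of_nonneg hk, max_eq_left hk]; ring
  have ht := (h.hasSum.tendsto_sum_nat.const_mul 2).sub hY
  refine ((hasSum_iff_tendsto_nat_of_nonneg (fun k => abs_nonneg (y k))
    (2 * (∑' k, max (y k) 0) - Y)).2 ?_).summable
  simpa only [habs, Finset.sum_sub_distrib, Finset.mul_sum] using ht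

/-- Partial sums of the greedy subseries of `∑ y` aiming at `c`: positive terms are used while
the partial sum is at most `c`, negative ones otherwise. -/
noncomputable def greedySum (y : ℕ → ℝ) (c : ℝ) : ℕ → ℝ
  | 0 => 0
  | n + 1 => greedySum y c n + if greedySum y c n ≤ c then max (y n) 0 else min (y n) 0

lemma greedySum_succ_of_le {y : ℕ → ℝ} {c : ℝ} {n : ℕ} (h : greedySum y c n ≤ c) :
    greedySum y c (n + 1) = greedySum y c n + max (y n) 0 := by
  rw [greedySum, if_pos h]

lemma greedySum_succ_of_lt {y : ℕ → ℝ} {c : ℝ} {n : ℕ} (h : c < greedySum y c n) :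
    greedySum y c (n + 1) = greedySum y c n + min (y n) 0 := by
  rw [greedySum, if_neg h.not_ge]

lemma exists_subseries_eq_greedySum (y : ℕ → ℝ) (c : ℝ) :
    ∃ ε : ℕ → Bool, ∀ N,
      ∑ n ∈ Finset.range N, (if ε n then y n else 0) = greedySum y c N := by
  classical
  refine ⟨fun n => decide (if greedySum y c n ≤ c then 0 < y n else y n < 0), fun N => ?_⟩
  induction N with
  | zero => simp [greedySum]
  | succ N ih =>
    rw [Finset.sum_range_succ, ih]
    by_cases h : greedySum y c N ≤ c
    · rw [greedySum_succ_of_le h]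
      by_cases hy : 0 < y N
      · simp [h, hy, hy.le]
      · simp [h, hy, not_lt.1 hy]
    · rw [greedySum_succ_of_lt (not_le.1 h)]
      by_cases hy : y N < 0
      · simp [h, hy, hy.le]
      · simp [h, hy, not_lt.1 hy]

/-- Once the terms are smaller than `δ`, the greedy sums do not leave the `δ`-ball around `c`. -/
lemma abs_greedySum_succ_sub_le {y : ℕ → ℝ} {c δ : ℝ} {n : ℕ} (hy : |y n| ≤ δ)
    (h : |greedySum y c n - c| ≤ δ) : |greedySum y c (n + 1) - c| ≤ δ := by
  rw [abs_le] at *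
  rcases le_or_gt (greedySum y c n) c with hc | hc
  · rw [greedySum_succ_of_le hc]
    rcases le_total (y n) 0 with hk | hk
    · rw [max_eq_right hk]; constructor <;> linarith
    · rw [max_eq_left hk]; constructor <;> linarith
  · rw [greedySum_succ_of_lt hc]
    rcases le_total (y n) 0 with hk | hk
    · rw [min_eq_left hk]; constructor <;> linarith
    · rw [min_eq_right hk]; constructor <;> linarith

lemma tendsto_sum_range_shift_atTop {f : ℕ → ℝ} (hf : ∀ n, 0 ≤ f n) (h : ¬ Summable f) (N : ℕ) :
    Tendsto (fun m => ∑ k ∈ Finset.range m, f (N + k)) atTop atTop := by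
  refine (not_summable_iff_tendsto_nat_atTop_of_nonneg fun k => hf (N + k)).1 fun hs => h ?_
  simp only [add_comm N] at hs
  exact (summable_nat_add_iff N).1 hs

lemma tendsto_greedySum {y : ℕ → ℝ} (hy : Tendsto y atTop (𝓝 0))
    (hpos : ¬ Summable fun k => max (y k) 0) (hneg : ¬ Summable fun k => max (-y k) 0) (c : ℝ) :
    Tendsto (greedySum y c) atTop (𝓝 c) := by
  rw [Metric.tendsto_atTop]
  intro η hη
  obtain ⟨δ, hδ, hδη⟩ := exists_between hη
  obtain ⟨N, hN⟩ := Metric.tendsto_atTop.1 hy δ hδ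
  have hsmall : ∀ n, N ≤ n → |y n| ≤ δ := fun n hn => by
    simpa [Real.dist_eq] using (hN n hn).le
  suffices h : ∃ n, N ≤ n ∧ |greedySum y c n - c| ≤ δ by
    obtain ⟨n, hn, hnδ⟩ := h
    refine ⟨n, fun m hm => lt_of_le_of_lt ?_ hδη⟩
    rw [Real.dist_eq]
    induction m, hm using Nat.le_induction with
    | base => exact hnδ
    | succ m hm ih => exact abs_greedySum_succ_sub_le (hsmall m (hn.trans hm)) ih
  by_contra! hfar
  rcases le_or_gt (greedySum y c N) c with hc | hc
  · have key : ∀ m, greedySum y c (N + m) =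
        greedySum y c N + ∑ k ∈ Finset.range m, max (y (N + k)) 0 ∧
        greedySum y c (N + m) ≤ c := by
      intro m
      induction m with
      | zero => simpa using hc
      | succ m ih =>
        have hstep := greedySum_succ_of_le ih.2
        refine ⟨by rw [← add_assoc, hstep, ih.1, Finset.sum_range_succ, add_assoc], ?_⟩
        have h1 := hfar (N + m) (by omega)
        rw [abs_of_nonpos (by linarith [ih.2])] at h1
        have h2 : max (y (N + m)) 0 ≤ δ :=
          max_le ((le_abs_self _).trans (hsmall _ (by omega))) hδ.le
        rw [← add_assoc, hstep]
        linarith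
    obtain ⟨m, hm⟩ := ((tendsto_sum_range_shift_atTop (fun _ => le_max_right _ _) hpos
      N).eventually_gt_atTop (c - greedySum y c N)).exists
    have := key m
    linarith
  · have key : ∀ m, greedySum y c (N + m) =
        greedySum y c N - ∑ k ∈ Finset.range m, max (-y (N + k)) 0 ∧
        c < greedySum y c (N + m) := by
      intro m
      induction m with
      | zero => simpa using hc
      | succ m ih =>
        have hstep := greedySum_succ_of_lt ih.2
        have hmin : min (y (N + m)) 0 = -max (-y (N + m)) 0 := by
          rw [← min_neg_neg, neg_neg, neg_zero]
        rw [hmin] at hstep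
        refine ⟨by rw [← add_assoc, hstep, ih.1, Finset.sum_range_succ]; ring, ?_⟩
        have h1 := hfar (N + m) (by omega)
        rw [abs_of_nonneg (by linarith [ih.2])] at h1
        have h2 : max (-y (N + m)) 0 ≤ δ :=
          max_le ((neg_le_abs _).trans (hsmall _ (by omega))) hδ.le
        rw [← add_assoc, hstep]
        linarith
    obtain ⟨m, hm⟩ := ((tendsto_sum_range_shift_atTop (fun _ => le_max_right _ _) hneg
      N).eventually_gt_atTop (greedySum y c N - c)).exists
    have := key m
    linarith

/-- Every real number is a subsum of any tail of a conditionally convergent series. -/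
lemma exists_tail_subseries_tendsto {y : ℕ → ℝ} {Y : ℝ}
    (hY : Tendsto (fun N => ∑ k ∈ Finset.range N, y k) atTop (𝓝 Y))
    (hynabs : ¬ Summable fun k => |y k|) (N : ℕ) (c : ℝ) :
    ∃ ε : ℕ → Bool,
      Tendsto (fun m => ∑ n ∈ Finset.range m, if ε n then y (n + N) else 0) atTop (𝓝 c) := by
  have hy : Tendsto y atTop (𝓝 0) := by
    have h := ((tendsto_add_atTop_iff_nat 1).2 hY).sub hY
    simpa only [Finset.sum_range_succ, add_sub_cancel_left, sub_self] using h
  have hpos := not_summable_max_zero_s16 hY hynabs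
  have hneg := not_summable_max_zero_s16 (y := fun k => -y k) (Y := -Y)
    (by simpa only [Finset.sum_neg_distrib] using hY.neg) (by simpa only [abs_neg] using hynabs)
  obtain ⟨ε, hε⟩ := exists_subseries_eq_greedySum (fun n => y (n + N)) c
  refine ⟨ε, ?_⟩
  simp only [hε]
  exact tendsto_greedySum ((tendsto_add_atTop_iff_nat N).2 hy)
    (fun h => hpos ((summable_nat_add_iff N).1 h)) (fun h => hneg ((summable_nat_add_iff N).1 h)) c

lemma summable_subseries {x : ℕ → ℝ} (hx0 : ∀ k, 0 ≤ x k) (hx : Summable x) (ε : ℕ → Bool) :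
    Summable fun n => if ε n then x n else 0 := by
  refine Summable.of_nonneg_of_le (fun n => ?_) (fun n => ?_) hx <;> split_ifs <;> simp [hx0]

/-- A subsum of a positive summable series can be perturbed by less than `η` so that the
corresponding subsum of a conditionally convergent series takes a prescribed value. -/
lemma exists_subseries_near {x y : ℕ → ℝ} {Y : ℝ} (hx0 : ∀ k, 0 ≤ x k) (hx : Summable x)
    (hY : Tendsto (fun N => ∑ k ∈ Finset.range N, y k) atTop (𝓝 Y))
    (hynabs : ¬ Summable fun k => |y k|) (ε₀ : ℕ → Bool) (b : ℝ) {η : ℝ} (hη : 0 < η) :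
    ∃ ε : ℕ → Bool,
      |(∑' n, if ε n then x n else 0) - ∑' n, if ε₀ n then x n else 0| < η ∧
      Tendsto (fun N => ∑ n ∈ Finset.range N, if ε n then y n else 0) atTop (𝓝 b) := by
  obtain ⟨N, hN⟩ := ((tendsto_sum_nat_add x).eventually_lt_const hη).exists
  obtain ⟨e, he⟩ := exists_tail_subseries_tendsto hY hynabs N
    (b - ∑ n ∈ Finset.range N, if ε₀ n then y n else 0)
  refine ⟨fun n => if n < N then ε₀ n else e (n - N), ?_, ?_⟩
  · have hs := summable_subseries hx0 hx (fun n => if n < N then ε₀ n else e (n - N))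
    have hs₀ := summable_subseries hx0 hx ε₀
    have hhead : ∑ n ∈ Finset.range N,
        (if (if n < N then ε₀ n else e (n - N)) then x n else 0) =
        ∑ n ∈ Finset.range N, if ε₀ n then x n else 0 :=
      Finset.sum_congr rfl fun n hn => by rw [if_pos (Finset.mem_range.1 hn)]
    rw [← hs.sum_add_tsum_nat_add N, ← hs₀.sum_add_tsum_nat_add N, hhead, add_sub_add_left_eq_sub]
    have hxN := (summable_nat_add_iff N).2 hx
    have hsN := (summable_nat_add_iff N).2 hs
    have hs₀N := (summable_nat_add_iff N).2 hs₀
    have h1 := hsN.tsum_le_tsum (fun n => by split_ifs <;> simp [hx0]) hxN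
    have h2 := hs₀N.tsum_le_tsum (fun n => by split_ifs <;> simp [hx0]) hxN
    have h3 := tsum_nonneg (L := .unconditional ℕ)
      (g := fun n => if (if n + N < N then ε₀ (n + N) else e (n + N - N)) then x (n + N) else 0)
      (fun n => by split_ifs <;> simp [hx0])
    have h4 := tsum_nonneg (L := .unconditional ℕ) (g := fun n => if ε₀ (n + N) then x (n + N) else 0)
      (fun n => by split_ifs <;> simp [hx0])
    rw [abs_lt]
    constructor <;> linarith
  · rw [← tendsto_add_atTop_iff_nat N]
    have h := he.const_add (∑ n ∈ Finset.range N, if ε₀ n then y n else 0)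
    rw [add_sub_cancel] at h
    refine h.congr fun m => ?_
    rw [add_comm m N, Finset.sum_range_add]
    congr 1
    · exact Finset.sum_congr rfl fun n hn => by beta_reduce; rw [if_pos (Finset.mem_range.1 hn)]
    · refine Finset.sum_congr rfl fun n _ => ?_
      beta_reduce
      rw [if_neg (Nat.not_lt.2 (Nat.le_add_right N n)), Nat.add_sub_cancel_left, add_comm N n]

/-- A nontrivial interval of subsums contains one whose `y`-counterpart is prescribed. -/
lemma exists_subseries_mem_interval {x y : ℕ → ℝ} {Y : ℝ} (hx0 : ∀ k, 0 ≤ x k)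
    (hx : Summable x) (hY : Tendsto (fun N => ∑ k ∈ Finset.range N, y k) atTop (𝓝 Y))
    (hynabs : ¬ Summable fun k => |y k|) {I : Set ℝ} (hI : I ⊆ achv x) (hconn : I.OrdConnected)
    (hnt : I.Nontrivial) (b : ℝ) :
    ∃ ε : ℕ → Bool, ∃ t ∈ I,
      Tendsto (fun N => ∑ n ∈ Finset.range N, if ε n then x n else 0) atTop (𝓝 t) ∧
      Tendsto (fun N => ∑ n ∈ Finset.range N, if ε n then y n else 0) atTop (𝓝 b) := by
  obtain ⟨p, hp, q, hq, hpq⟩ := hnt.exists_lt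
  obtain ⟨ε₀, hε₀⟩ := hI (hconn.out hp hq ⟨by linarith, by linarith⟩ : (p + q) / 2 ∈ I)
  obtain ⟨ε, hε, hεy⟩ := exists_subseries_near hx0 hx hY hynabs ε₀ b (half_pos (sub_pos.2 hpq))
  rw [tendsto_nhds_unique (summable_subseries hx0 hx ε₀).hasSum.tendsto_sum_nat hε₀,
    abs_lt] at hε
  exact ⟨ε, _, hconn.out hp hq ⟨by linarith, by linarith⟩,
    (summable_subseries hx0 hx ε).hasSum.tendsto_sum_nat, hεy⟩

/-- Subsums of `∑ x` along `ε`, `δ` and of `∑ y` along `ε` combine to a subsum of the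
interleaved planar series. -/
lemma mem_achv_interleave {x y : ℕ → ℝ} {ε δ : ℕ → Bool} {t z b : ℝ}
    (hx : Tendsto (fun N => ∑ n ∈ Finset.range N, if ε n then x n else 0) atTop (𝓝 t))
    (hz : Tendsto (fun N => ∑ n ∈ Finset.range N, if δ n then x n else 0) atTop (𝓝 z))
    (hy : Tendsto (fun N => ∑ n ∈ Finset.range N, if ε n then y n else 0) atTop (𝓝 b)) :
    (t + z, b) ∈ achv
      (fun n => ((x (n / 2), if n % 2 = 0 then y (n / 2) else 0) : ℝ × ℝ)) := by
  have h1 : Tendsto (fun N => ∑ n ∈ Finset.range N, if ε n then (x n, y n) else (0 : ℝ × ℝ))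
      atTop (𝓝 (t, b)) := by
    refine (hx.prodMk_nhds hy).congr fun N => ?_
    ext <;> simp only [Prod.fst_sum, Prod.snd_sum] <;>
      exact Finset.sum_congr rfl fun n _ => by split_ifs <;> rfl
  have h2 : Tendsto (fun N => ∑ n ∈ Finset.range N, if δ n then (x n, (0 : ℝ)) else (0 : ℝ × ℝ))
      atTop (𝓝 (z, 0)) := by
    refine (hz.prodMk_nhds (tendsto_const_nhds (x := (0 : ℝ)))).congr fun N => ?_
    ext <;> simp only [Prod.fst_sum, Prod.snd_sum]
    · exact Finset.sum_congr rfl fun n _ => by split_ifs <;> rfl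
    · exact (Finset.sum_eq_zero fun n _ => by split_ifs <;> rfl).symm
  refine ⟨fun n => if n % 2 = 0 then ε (n / 2) else δ (n / 2), ?_⟩
  have h := tendsto_sum_range_interleave h1 h2
  rw [Prod.mk_add_mk, add_zero] at h
  refine h.congr fun N => Finset.sum_congr rfl fun n _ => ?_
  by_cases hn : n % 2 = 0 <;> simp [hn]

/-- Let `x` be a positive summable sequence with sum `X` satisfying
(i) `A(x) + A(x) = [0, 2X]` and (ii) for every `a ∈ (0, 2X)` there is a nondegenerate
interval `I ⊆ A(x)` each of whose points `t` admits `z ∈ A(x)` with `t + z = a`. Let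
`∑ y_k` be conditionally convergent with sum `Y`. Interleave to the sequence of pairs
`(x̄_n, ȳ_n)` with `x̄_{2k-1} = x̄_{2k} = x_k`, `ȳ_{2k-1} = y_k`, `ȳ_{2k} = 0`. Then its
achievement set equals `((0, 2X) × ℝ) ∪ {(0,0), (2X, Y)}`. -/
theorem stmt_16 (x y : ℕ → ℝ) (X Y : ℝ)
    (hxpos : ∀ k, 0 < x k) (hX : HasSum x X)
    (hi : achv x + achv x = Set.Icc 0 (2 * X))
    (hii : ∀ a ∈ Set.Ioo (0 : ℝ) (2 * X), ∃ I : Set ℝ, I ⊆ achv x ∧ I.OrdConnected ∧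
      I.Nontrivial ∧ ∀ t ∈ I, ∃ z ∈ achv x, t + z = a)
    (hY : Tendsto (fun N => ∑ k ∈ Finset.range N, y k) atTop (𝓝 Y))
    (hynabs : ¬ Summable fun k => |y k|) :
    achv (fun n => ((x (n / 2), if n % 2 = 0 then y (n / 2) else 0) : ℝ × ℝ)) =
      (Set.Ioo (0 : ℝ) (2 * X) ×ˢ (Set.univ : Set ℝ)) ∪
        {((0 : ℝ), (0 : ℝ)), ((2 * X : ℝ), Y)} := by
  have hx0 : ∀ k, 0 ≤ x k := fun k => (hxpos k).le
  ext ⟨s, b⟩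
  constructor
  · rintro ⟨ε, hε⟩
    have hxbar : HasSum (fun n : ℕ => x (n / 2)) (2 * X) := by
      refine (hasSum_iff_tendsto_nat_of_nonneg (fun n => hx0 (n / 2)) _).2 ?_
      rw [two_mul]
      simpa using tendsto_sum_range_interleave hX.tendsto_sum_nat hX.tendsto_sum_nat
    have hs : Tendsto (fun N => ∑ n ∈ Finset.range N, if ε n then x (n / 2) else 0)
        atTop (𝓝 s) := by
      refine ((continuous_fst.tendsto _).comp hε).congr fun N => ?_
      simp only [Function.comp_apply, Prod.fst_sum]
      exact Finset.sum_congr rfl fun n _ => by split_ifs <;> rfl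
    have hb : Tendsto (fun N => ∑ n ∈ Finset.range N,
        if ε n then (if n % 2 = 0 then y (n / 2) else 0) else 0) atTop (𝓝 b) := by
      refine ((continuous_snd.tendsto _).comp hε).congr fun N => ?_
      simp only [Function.comp_apply, Prod.snd_sum]
      exact Finset.sum_congr rfl fun n _ => by split_ifs <;> rfl
    have hsub0 : ∀ n, 0 ≤ if ε n then x (n / 2) else 0 := fun n => by split_ifs <;> simp [hx0]
    have hsuble : ∀ n, (if ε n then x (n / 2) else 0) ≤ x (n / 2) := fun n => by
      split_ifs <;> simp [hx0]
    have hsum := (hasSum_iff_tendsto_nat_of_nonneg hsub0 s).2 hs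
    rcases (hsum.nonneg hsub0).eq_or_lt with h0 | h0
    · subst h0
      have hz := (hasSum_zero_iff_of_nonneg hsub0).1 hsum
      have hεf : ∀ n, ε n = false := fun n => by
        have := congrFun hz n
        by_contra hn
        simp [Bool.not_eq_false _ ▸ hn, (hxpos (n / 2)).ne'] at this
      simp only [hεf, Bool.false_eq_true, if_false, Finset.sum_const_zero] at hb
      rw [tendsto_nhds_unique hb tendsto_const_nhds]
      simp
    rcases (hasSum_le hsuble hsum hxbar).eq_or_lt with h1 | h1
    · subst h1
      have hd := hxbar.sub hsum
      rw [sub_self] at hd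
      have hz := (hasSum_zero_iff_of_nonneg fun n => sub_nonneg.2 (hsuble n)).1 hd
      have hεt : ∀ n, ε n = true := fun n => by
        have := congrFun hz n
        by_contra hn
        simp [hn, (hxpos (n / 2)).ne'] at this
      simp only [hεt, if_true] at hb
      have hY' := tendsto_sum_range_interleave hY (v := fun _ => 0) (b := 0) (by simp)
      rw [add_zero] at hY'
      rw [tendsto_nhds_unique hb hY']
      simp
    · exact Or.inl ⟨⟨h0, h1⟩, trivial⟩
  · rintro (⟨hs, -⟩ | h | h)
    · obtain ⟨I, hI, hconn, hnt, hz⟩ := hii s hs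
      obtain ⟨ε, t, ht, hεx, hεy⟩ :=
        exists_subseries_mem_interval hx0 hX.summable hY hynabs hI hconn hnt b
      obtain ⟨z, ⟨δ, hδ⟩, rfl⟩ := hz t ht
      exact mem_achv_interleave hεx hδ hεy
    · rw [h, Prod.mk_zero_zero]
      exact ⟨fun _ => false, by simp⟩
    · rw [Set.mem_singleton_iff] at h
      rw [h, two_mul]
      exact mem_achv_interleave (ε := fun _ => true) (δ := fun _ => true)
        (by simpa using hX.tendsto_sum_nat) (by simpa using hX.tendsto_sum_nat) (by simpa using hY)
end
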